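/- arXiv:1602.07004 — 5 statements merged into one kernel-verified Lean document; each statement's English description precedes it below -/
import Mathlib

section
/- Let ν be a tempered Borel measure on ℝ and μ a tempered Borel measure on ℝ^d, and let γ : ℝ → [0,∞] and f : ℝ^d → [0,∞] be locally integrable functions such that ∫_ℝ φ(t)γ(t)dt = (2π)^{-1}∫_ℝ ℱφ(τ) ν(dτ) for every Schwartz function φ on ℝ and ∫_{ℝ^d} ψ(x)f(x)dx = (2π)^{-d}∫_{ℝ^d} ℱψ(ξ) μ(dξ) for every Schwartz function ψ on ℝ^d. Then for any φ₁, φ₂ ∈ C_c^∞(ℝ^{1+d}; ℝ), J(φ₁,φ₂) := ∫_{ℝ²×ℝ^{2d}} γ(t−s) f(x−y) φ₁(t,x) φ₂(s,y) dx dy dt ds = (2π)^{-(d+1)} ∫_{ℝ^d} ∫_ℝ ℱφ₁(τ,ξ) · conj(ℱφ₂(τ,ξ)) ν(dτ) μ(dξ), where ℱ denotes the Fourier transform in all d+1 variables, ℱφ(τ,ξ) = ∫_{ℝ^{1+d}} e^{-i(τt+ξ·x)} φ(t,x) dt dx. -/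
/-!
The double integral is a single integral against a correlation: with
`Φ(z) = ∫ φ₁(z + w) φ₂(w) dw`, the shear `(z, w) ↦ (z + w, w)` and Fubini give
`J(φ₁, φ₂) = ∫∫ γ(t) f(x) Φ(t, x) dx dt` (`Jcov_eq`), and `Φ` is again smooth with compact support.
Up to reflecting `φ₂`, `Φ` is a convolution, so `ℱΦ = ℱφ₁ · conj (ℱφ₂)` (`FTtd_corr`).

It remains to prove Parseval's formula for the product `γ ⊗ f` tested against `Φ`
(`parseval_prod`). Let `F(t, ξ)` be the Fourier transform of `Φ(t, ·)` at `ξ` (`pft`). The formula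
for `f` applies to `Φ(t, ·)` at each fixed `t`, and the formula for `γ` applies to `F(·, ξ)` at each
fixed `ξ`, since `F` is jointly smooth (`contDiff_pft`) and compactly supported in `t`. Between the
two, the integrals in `t` and in `ξ` are exchanged. This is allowed because `F` decays in `ξ` faster
than any power of `1 + |ξ|²`, uniformly in `t` (`pft_decay`): the slices `Φ(t, ·)` form a bounded
family in Schwartz space (`slice_bound`), on which the Fourier transform is continuous. So
`γ(t) F(t, ξ)` is integrable against `dt ⊗ μ` as `μ` is tempered and `γ` locally integrable.
-/


open MeasureTheory Real
open scoped ENNReal RealInnerProductSpace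

noncomputable section

/-- Euclidean space `ℝ^d`. -/
abbrev Ed (d : ℕ) := EuclideanSpace ℝ (Fin d)

/-- Fourier transform on `ℝ^d`: `ℱφ(ξ) = ∫ e^{-i ξ·x} φ(x) dx`. -/
def FTd (d : ℕ) (φ : Ed d → ℂ) (ξ : Ed d) : ℂ :=
  ∫ x : Ed d, Complex.exp (-(Complex.I * ((⟪ξ, x⟫ : ℝ) : ℂ))) * φ x

/-- Fourier transform on `ℝ`: `ℱφ(τ) = ∫ e^{-i τ t} φ(t) dt`. -/
def FT1 (φ : ℝ → ℂ) (τ : ℝ) : ℂ :=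
  ∫ t : ℝ, Complex.exp (-(Complex.I * ((τ * t : ℝ) : ℂ))) * φ t

/-- Fourier transform on `ℝ^{1+d}` in all `d+1` variables:
`ℱφ(τ,ξ) = ∫ e^{-i(τ t + ξ·x)} φ(t,x) dt dx`. -/
def FTtd (d : ℕ) (φ : ℝ × Ed d → ℂ) (p : ℝ × Ed d) : ℂ :=
  ∫ q : ℝ × Ed d, Complex.exp (-(Complex.I * ((p.1 * q.1 + ⟪p.2, q.2⟫ : ℝ) : ℂ))) * φ q

/-- A Borel measure on `ℝ^d` is tempered if `∫ (1+|ξ|²)^{-k} dμ < ∞` for some `k ∈ ℕ`. -/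
def IsTempered (d : ℕ) (μ : Measure (Ed d)) : Prop :=
  ∃ k : ℕ, ∫⁻ ξ, ENNReal.ofReal ((1 + ‖ξ‖ ^ 2) ^ (-(k : ℝ))) ∂μ < ⊤

/-- A Borel measure on `ℝ` is tempered if `∫ (1+τ²)^{-k} dν < ∞` for some `k ∈ ℕ`. -/
def IsTempered1 (ν : Measure ℝ) : Prop :=
  ∃ k : ℕ, ∫⁻ τ, ENNReal.ofReal ((1 + τ ^ 2) ^ (-(k : ℝ))) ∂ν < ⊤

/-- Local integrability for `[0,∞]`-valued functions on `ℝ^d`. -/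
def LocIntENN (d : ℕ) (g : Ed d → ℝ≥0∞) : Prop :=
  ∀ s : Set (Ed d), IsCompact s → ∫⁻ x in s, g x < ⊤

/-- Local integrability for `[0,∞]`-valued functions on `ℝ`. -/
def LocIntENN1 (g : ℝ → ℝ≥0∞) : Prop :=
  ∀ s : Set ℝ, IsCompact s → ∫⁻ x in s, g x < ⊤

/-- `∫_ℝ φ(t) γ(t) dt = (2π)⁻¹ ∫_ℝ ℱφ(τ) ν(dτ)` for every Schwartz function `φ` on `ℝ`. -/
def ParsevalFT1 (g : ℝ → ℝ≥0∞) (ν : Measure ℝ) : Prop :=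
  ∀ φ : SchwartzMap ℝ ℂ,
    ∫ t, φ t * (((g t).toReal : ℝ) : ℂ) =
      ((2 * π : ℝ)⁻¹ : ℂ) * ∫ τ, FT1 (fun s => φ s) τ ∂ν

/-- `∫_{ℝ^d} ψ(x) f(x) dx = (2π)^{-d} ∫_{ℝ^d} ℱψ(ξ) μ(dξ)` for every Schwartz `ψ` on `ℝ^d`. -/
def ParsevalFT (d : ℕ) (g : Ed d → ℝ≥0∞) (μ : Measure (Ed d)) : Prop :=
  ∀ φ : SchwartzMap (Ed d) ℂ,
    ∫ x, φ x * (((g x).toReal : ℝ) : ℂ) =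
      (((2 * π) ^ d : ℝ)⁻¹ : ℂ) * ∫ ξ, FTd d (fun y => φ y) ξ ∂μ

/-- The covariance functional
`J(φ₁,φ₂) = ∫ γ(t−s) f(x−y) φ₁(t,x) φ₂(s,y) dx dy dt ds` on `ℝ² × ℝ^{2d}`. -/
def Jcov (d : ℕ) (γ : ℝ → ℝ≥0∞) (f : Ed d → ℝ≥0∞) (φ₁ φ₂ : ℝ × Ed d → ℝ) : ℝ :=
  ∫ p : (ℝ × Ed d) × (ℝ × Ed d),
    (γ (p.1.1 - p.2.1)).toReal * (f (p.1.2 - p.2.2)).toReal * φ₁ p.1 * φ₂ p.2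

/-! ### Tempered measures -/

theorem IsTempered.integrable {d : ℕ} {μ : Measure (Ed d)} (h : IsTempered d μ) :
    ∃ k : ℕ, Integrable (fun ξ : Ed d => ((1 + ‖ξ‖ ^ 2) ^ k)⁻¹) μ := by
  obtain ⟨k, hk⟩ := h
  refine ⟨k, ?_, ?_⟩
  · exact (by fun_prop : Measurable fun ξ : Ed d => ((1 + ‖ξ‖ ^ 2) ^ k)⁻¹).aestronglyMeasurable
  · rw [hasFiniteIntegral_iff_ofReal (Filter.Eventually.of_forall fun ξ => by positivity)]
    refine lt_of_eq_of_lt (lintegral_congr fun ξ => ?_) hk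
    rw [Real.rpow_neg (by positivity), Real.rpow_natCast]

theorem IsTempered.sigmaFinite {d : ℕ} {μ : Measure (Ed d)} (h : IsTempered d μ) :
    SigmaFinite μ := by
  obtain ⟨k, hk⟩ := h.integrable
  refine Measure.sigmaFinite_of_countable (Set.countable_range fun n : ℕ =>
    {ξ : Ed d | 1 / ((n : ℝ) + 1) ≤ ‖((1 + ‖ξ‖ ^ 2) ^ k)⁻¹‖}) ?_ ?_
  · rintro _ ⟨n, rfl⟩
    exact hk.measure_norm_ge_lt_top (by positivity)
  · refine Set.eq_univ_of_forall fun ξ => ?_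
    obtain ⟨n, hn⟩ := exists_nat_one_div_lt
      (norm_pos_iff.2 (by positivity : ((1 + ‖ξ‖ ^ 2) ^ k)⁻¹ ≠ 0))
    exact ⟨_, ⟨n, rfl⟩, hn.le⟩

/-! ### Partial Fourier transform in the space variable -/

/-- The partial Fourier transform in the space variable: `(t, ξ) ↦ ∫ e^{-i ξ·x} Φ(t, x) dx`. -/
def pft (d : ℕ) (Φ : ℝ × Ed d → ℂ) (p : ℝ × Ed d) : ℂ := FTd d (fun x => Φ (p.1, x)) p.2

/-- The integral defining `pft` is the convolution of the constant function `1` with a family that is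
smooth in the parameter `(t, ξ)`, evaluated at the origin. -/
theorem contDiff_pft {d : ℕ} {Φ : ℝ × Ed d → ℂ} (hs : ContDiff ℝ (⊤ : ℕ∞) Φ)
    (hc : HasCompactSupport Φ) : ContDiff ℝ (⊤ : ℕ∞) (pft d Φ) := by
  let g : ℝ × Ed d → Ed d → ℂ := fun p y =>
    Complex.exp (Complex.I * ((⟪p.2, y⟫ : ℝ) : ℂ)) * Φ (p.1, -y)
  have hg : ContDiff ℝ (⊤ : ℕ∞) (Function.uncurry g) := by
    refine ContDiff.mul (ContDiff.cexp (contDiff_const.mul ?_)) (hs.comp ?_)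
    · have : ContDiff ℝ (⊤ : ℕ∞) (fun z : (ℝ × Ed d) × Ed d => (⟪z.1.2, z.2⟫ : ℝ)) :=
        ContDiff.inner ℝ (by fun_prop) (by fun_prop)
      exact Complex.ofRealCLM.contDiff.comp this
    · fun_prop
  have := contDiffOn_convolution_right_with_param (𝕜 := ℝ) (μ := (volume : Measure (Ed d)))
    (f := fun _ => (1 : ℂ)) (ContinuousLinearMap.mul ℝ ℂ) (g := g) (s := Set.univ)
    (k := (fun z : ℝ × Ed d => -z.2) '' tsupport Φ) (n := ⊤) isOpen_univ
    (hc.isCompact.image (by fun_prop)) (fun p x _ hx => ?_)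
    (locallyIntegrable_const (1 : ℂ)) hg.contDiffOn
  · rw [Set.univ_prod_univ, contDiffOn_univ] at this
    convert this.comp (contDiff_id.prodMk contDiff_const : ContDiff ℝ (⊤ : ℕ∞)
      (fun p : ℝ × Ed d => (p, (0 : Ed d)))) using 1
    ext p
    simp [pft, FTd, convolution, g, Complex.exp_neg]
  · have : Φ (p.1, -x) = 0 := by
      refine image_eq_zero_of_notMem_tsupport fun h => hx ⟨_, h, by simp⟩
    simp [g, this]

theorem hcs_slice {d : ℕ} {Φ : ℝ × Ed d → ℂ}
    (hc : HasCompactSupport Φ) (t : ℝ) : HasCompactSupport (fun x => Φ (t, x)) := by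
  refine HasCompactSupport.intro (hc.isCompact.image continuous_snd) fun x hx => ?_
  exact image_eq_zero_of_notMem_tsupport fun h => hx ⟨_, h, rfl⟩

theorem pft_zero {d : ℕ} {Φ : ℝ × Ed d → ℂ} {t : ℝ} (ht : t ∉ Prod.fst '' tsupport Φ) (ξ : Ed d) :
    pft d Φ (t, ξ) = 0 := by
  have (x : Ed d) : Φ (t, x) = 0 :=
    image_eq_zero_of_notMem_tsupport fun h => ht ⟨_, h, rfl⟩
  simp [pft, FTd, this]

/-- The slice `x ↦ Φ(t, x)` as a Schwartz function. -/
def slice {d : ℕ} {Φ : ℝ × Ed d → ℂ} (hs : ContDiff ℝ (⊤ : ℕ∞) Φ)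
    (hc : HasCompactSupport Φ) (t : ℝ) : SchwartzMap (Ed d) ℂ :=
  (hcs_slice hc t).toSchwartzMap (hs.comp (contDiff_prodMk_right t))

theorem slice_apply {d : ℕ} {Φ : ℝ × Ed d → ℂ} (hs : ContDiff ℝ (⊤ : ℕ∞) Φ)
    (hc : HasCompactSupport Φ) (t : ℝ) (x : Ed d) : slice hs hc t x = Φ (t, x) := rfl

/-- Each Schwartz seminorm of the slice `Φ(t, ·)` is controlled by the same seminorm of `Φ` on
`ℝ × ℝ^d`, hence is bounded uniformly in `t`. -/
theorem slice_bound {d : ℕ} {Φ : ℝ × Ed d → ℂ} (hs : ContDiff ℝ (⊤ : ℕ∞) Φ)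
    (hc : HasCompactSupport Φ) (k n : ℕ) :
    ∃ C, 0 ≤ C ∧ ∀ t, SchwartzMap.seminorm ℂ k n (slice hs hc t) ≤ C := by
  obtain ⟨C, hC⟩ := (hc.toSchwartzMap hs).decay k n
  refine ⟨C * ∏ i : Fin n, ‖ContinuousLinearMap.inr ℝ ℝ (Ed d)‖, ?_, fun t => ?_⟩
  · have := hC.1
    positivity
  · refine SchwartzMap.seminorm_le_bound _ _ _ _ (by have := hC.1; positivity) fun x => ?_
    have h1 : (slice hs hc t : Ed d → ℂ) =
        (fun z => Φ ((t, 0) + z)) ∘ ContinuousLinearMap.inr ℝ ℝ (Ed d) := by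
      ext x; simp [slice_apply]
    have h2 : ContDiff ℝ (⊤ : ℕ∞) (fun z => Φ ((t, 0) + z)) := hs.comp (by fun_prop)
    rw [h1, ContinuousLinearMap.iteratedFDeriv_comp_right _ h2 x (i := n) (by exact_mod_cast le_top),
      iteratedFDeriv_comp_add_left]
    have h3 := hC.2 (t, x)
    have h4 : (t, (0 : Ed d)) + ContinuousLinearMap.inr ℝ ℝ (Ed d) x = (t, x) := by simp
    rw [h4]
    calc _ ≤ ‖(t, x)‖ ^ k * (‖iteratedFDeriv ℝ n Φ (t, x)‖ *
          ∏ i : Fin n, ‖ContinuousLinearMap.inr ℝ ℝ (Ed d)‖) := by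
          gcongr
          · exact norm_snd_le (t, x)
          · exact ContinuousMultilinearMap.norm_compContinuousLinearMap_le _ _
      _ = ‖(t, x)‖ ^ k * ‖iteratedFDeriv ℝ n Φ (t, x)‖ *
          ∏ i : Fin n, ‖ContinuousLinearMap.inr ℝ ℝ (Ed d)‖ := by ring
      _ ≤ _ := by gcongr; exact h3

open scoped FourierTransform in
/-- Comparison with the normalization `e^{-2πi ξ·x}` of Mathlib's Fourier transform. -/
theorem FTd_eq (d : ℕ) (φ : Ed d → ℂ) (ξ : Ed d) : FTd d φ ξ = 𝓕 φ ((2 * π)⁻¹ • ξ) := by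
  rw [Real.fourier_eq']
  refine integral_congr_ae (Filter.Eventually.of_forall fun x => ?_)
  simp only [smul_eq_mul, inner_smul_right, real_inner_comm x ξ]
  congr 2
  push_cast
  field_simp

open scoped FourierTransform in
/-- Rapid decay of the partial Fourier transform in `ξ`, uniformly in `t`. -/
theorem pft_decay {d : ℕ} {Φ : ℝ × Ed d → ℂ} (hs : ContDiff ℝ (⊤ : ℕ∞) Φ)
    (hc : HasCompactSupport Φ) (k : ℕ) :
    ∃ C, 0 ≤ C ∧ ∀ p, ‖pft d Φ p‖ ≤ C * ((1 + ‖p.2‖ ^ 2) ^ k)⁻¹ := by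
  let q : Seminorm ℂ (SchwartzMap (Ed d) ℂ) :=
    (Finset.Iic (2 * k, 0)).sup (fun m => SchwartzMap.seminorm ℂ m.1 m.2)
  have hq : Continuous (q.comp
      (FourierTransform.fourierCLM ℂ (SchwartzMap (Ed d) ℂ)).toLinearMap) := by
    have h : Continuous q :=
      Seminorm.continuous_finsetSup fun m _ =>
        (schwartz_withSeminorms ℂ (Ed d) ℂ).continuous_seminorm m
    exact h.comp (FourierTransform.fourierCLM ℂ (SchwartzMap (Ed d) ℂ)).continuous
  obtain ⟨s, C, -, hC⟩ := Seminorm.bound_of_continuous (schwartz_withSeminorms ℂ (Ed d) ℂ) _ hq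
  choose B hB0 hB using slice_bound hs hc
  have h0 : 0 ≤ ∑ m ∈ s, B m.1 m.2 := Finset.sum_nonneg fun m _ => hB0 _ _
  refine ⟨(2 * π) ^ (2 * k) * (2 ^ (2 * k) * (C * ∑ m ∈ s, B m.1 m.2)), by positivity, fun p => ?_⟩
  have h1 : q (𝓕 (slice hs hc p.1)) ≤ C * ∑ m ∈ s, B m.1 m.2 := by
    refine (hC (slice hs hc p.1)).trans ?_
    rw [smul_apply]
    refine mul_le_mul_of_nonneg_left ?_ C.2
    refine Seminorm.finset_sup_apply_le h0 fun m hm => (hB m.1 m.2 p.1).trans ?_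
    exact Finset.single_le_sum (f := fun m : ℕ × ℕ => B m.1 m.2) (fun m _ => hB0 _ _) hm
  have h2 := SchwartzMap.one_add_le_sup_seminorm_apply (𝕜 := ℂ) (m := (2 * k, 0)) (k := 2 * k)
    (n := 0) le_rfl le_rfl (𝓕 (slice hs hc p.1)) ((2 * π)⁻¹ • p.2)
  rw [norm_iteratedFDeriv_zero, SchwartzMap.fourier_coe] at h2
  have h3 : pft d Φ p = 𝓕 (slice hs hc p.1 : Ed d → ℂ) ((2 * π)⁻¹ • p.2) := FTd_eq _ _ _
  rw [← h3] at h2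
  rw [← div_eq_mul_inv, le_div_iff₀ (by positivity)]
  -- the factor `(2π)^{2k}` compensates the rescaling of the frequency
  have h4 : (1 + ‖p.2‖ ^ 2) ^ k ≤ (2 * π) ^ (2 * k) * (1 + ‖(2 * π)⁻¹ • p.2‖) ^ (2 * k) := by
    rw [← mul_pow, pow_mul _ 2 k]
    gcongr
    rw [norm_smul, norm_inv, Real.norm_of_nonneg (by positivity), mul_add,
      mul_inv_cancel_left₀ (by positivity)]
    nlinarith [Real.pi_gt_three, norm_nonneg p.2]
  calc _ ≤ ‖pft d Φ p‖ * ((2 * π) ^ (2 * k) * (1 + ‖(2 * π)⁻¹ • p.2‖) ^ (2 * k)) := by gcongr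
    _ = (2 * π) ^ (2 * k) * ((1 + ‖(2 * π)⁻¹ • p.2‖) ^ (2 * k) * ‖pft d Φ p‖) := by ring
    _ ≤ _ := mul_le_mul_of_nonneg_left
      (h2.trans (mul_le_mul_of_nonneg_left h1 (by positivity))) (by positivity)

open scoped Convolution

instance isAddHaarMeasure_volume_prod (d : ℕ) :
    (volume : Measure (ℝ × Ed d)).IsAddHaarMeasure :=
  inferInstanceAs ((volume : Measure ℝ).prod (volume : Measure (Ed d))).IsAddHaarMeasure

/-! ### Local integrability -/

theorem locallyIntegrable_mul_prod {X Y : Type*} [MeasureSpace X] [MeasureSpace Y]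
    [PseudoMetricSpace X] [PseudoMetricSpace Y] [LocallyCompactSpace X] [LocallyCompactSpace Y]
    [SFinite (volume : Measure X)] [SFinite (volume : Measure Y)] {g : X → ℂ} {h : Y → ℂ}
    (hg : LocallyIntegrable g) (hh : LocallyIntegrable h) :
    LocallyIntegrable (fun z : X × Y => g z.1 * h z.2) := by
  refine locallyIntegrable_iff.2 fun K hK => ?_
  have h1 := (hg.integrableOn_isCompact (hK.image continuous_fst)).mul_prod
    (hh.integrableOn_isCompact (hK.image continuous_snd))
  rw [Measure.prod_restrict] at h1
  exact IntegrableOn.mono_set h1 fun z hz => ⟨⟨z, hz, rfl⟩, ⟨z, hz, rfl⟩⟩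

theorem locallyIntegrable_toReal {X : Type*} [MeasureSpace X] [PseudoMetricSpace X]
    [LocallyCompactSpace X] {g : X → ℝ≥0∞} (hg : Measurable g)
    (h : ∀ s : Set X, IsCompact s → ∫⁻ x in s, g x < ⊤) :
    LocallyIntegrable (fun x => (((g x).toReal : ℝ) : ℂ)) :=
  locallyIntegrable_iff.2 fun K hK =>
    (integrable_toReal_of_lintegral_ne_top hg.aemeasurable (h K hK).ne).ofReal

/-! ### Correlations and their Fourier transform -/

/-- The correlation `z ↦ ∫ φ₁(z + w) φ₂(w) dw`, without complex conjugation of `φ₂`. -/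
def corr (d : ℕ) (φ₁ φ₂ : ℝ × Ed d → ℂ) (z : ℝ × Ed d) : ℂ := ∫ w, φ₁ (z + w) * φ₂ w

theorem corr_eq_convolution (d : ℕ) (φ₁ φ₂ : ℝ × Ed d → ℂ) :
    corr d φ₁ φ₂ = (fun w => φ₂ (-w)) ⋆[ContinuousLinearMap.mul ℝ ℂ, volume] φ₁ := by
  ext z
  rw [corr, convolution, ← integral_neg_eq_self]
  simp [mul_comm, sub_eq_add_neg]

theorem hcs_neg {d : ℕ} {φ : ℝ × Ed d → ℂ} (hc : HasCompactSupport φ) :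
    HasCompactSupport (fun w => φ (-w)) := hc.comp_homeomorph (Homeomorph.neg _)

theorem contDiff_corr {d : ℕ} {φ₁ φ₂ : ℝ × Ed d → ℂ} (hs₁ : ContDiff ℝ (⊤ : ℕ∞) φ₁)
    (hc₁ : HasCompactSupport φ₁) (hs₂ : Continuous φ₂) :
    ContDiff ℝ (⊤ : ℕ∞) (corr d φ₁ φ₂) := by
  rw [corr_eq_convolution]
  exact hc₁.contDiff_convolution_right _ (hs₂.comp continuous_neg).locallyIntegrable hs₁

theorem hcs_corr {d : ℕ} {φ₁ φ₂ : ℝ × Ed d → ℂ}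
    (hc₁ : HasCompactSupport φ₁) (hc₂ : HasCompactSupport φ₂) :
    HasCompactSupport (corr d φ₁ φ₂) := by
  rw [corr_eq_convolution]
  exact (hcs_neg hc₂).convolution _ hc₁

/-- The character `q ↦ e^{-i p·q}` of `ℝ × ℝ^d`. -/
def chr (d : ℕ) (p q : ℝ × Ed d) : ℂ :=
  Complex.exp (-(Complex.I * ((p.1 * q.1 + ⟪p.2, q.2⟫ : ℝ) : ℂ)))

theorem continuous_chr {d : ℕ} (p : ℝ × Ed d) : Continuous (chr d p) := by
  have : Continuous fun q : ℝ × Ed d => p.1 * q.1 + (⟪p.2, q.2⟫ : ℝ) :=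
    (by fun_prop : Continuous fun q : ℝ × Ed d => p.1 * q.1).add
      (continuous_const.inner continuous_snd)
  unfold chr
  fun_prop

theorem chr_add {d : ℕ} (p q r : ℝ × Ed d) : chr d p (q + r) = chr d p q * chr d p r := by
  simp only [chr, ← Complex.exp_add, Prod.fst_add, Prod.snd_add, inner_add_right]
  congr 1; push_cast; ring

theorem conj_chr {d : ℕ} (p q : ℝ × Ed d) : (starRingEnd ℂ) (chr d p q) = chr d p (-q) := by
  simp only [chr, ← Complex.exp_conj, Prod.fst_neg, Prod.snd_neg, inner_neg_right, map_neg, map_mul,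
    Complex.conj_I, Complex.conj_ofReal]
  congr 1; push_cast; ring

/-- The hypothesis `hr` says that `φ₂` is real-valued; reflecting `φ₂` then conjugates its Fourier
transform. -/
theorem FTtd_corr {d : ℕ} {φ₁ φ₂ : ℝ × Ed d → ℂ} (hs₁ : Continuous φ₁)
    (hc₁ : HasCompactSupport φ₁) (hs₂ : Continuous φ₂) (hc₂ : HasCompactSupport φ₂)
    (hr : ∀ q, (starRingEnd ℂ) (φ₂ q) = φ₂ q) (p : ℝ × Ed d) :
    FTtd d (corr d φ₁ φ₂) p = FTtd d φ₁ p * (starRingEnd ℂ) (FTtd d φ₂ p) := by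
  have hi₁ : Integrable (fun z => chr d p z * φ₁ z) :=
    ((continuous_chr p).mul hs₁).integrable_of_hasCompactSupport hc₁.mul_left
  have hi₂ : Integrable (fun z => chr d p z * φ₂ (-z)) :=
    ((continuous_chr p).mul (hs₂.comp continuous_neg)).integrable_of_hasCompactSupport
      (hcs_neg hc₂).mul_left
  have h := integral_convolution (ContinuousLinearMap.mul ℝ ℂ) hi₂ hi₁
  have h1 : (starRingEnd ℂ) (FTtd d φ₂ p) = ∫ z, chr d p z * φ₂ (-z) := by
    rw [FTtd, ← integral_conj, ← integral_neg_eq_self]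
    refine integral_congr_ae (Filter.Eventually.of_forall fun z => ?_)
    change (starRingEnd ℂ) (chr d p (-z) * φ₂ (-z)) = _
    simp [conj_chr, hr]
  rw [h1, mul_comm]
  refine Eq.trans ?_ h
  refine integral_congr_ae (Filter.Eventually.of_forall fun z => ?_)
  change chr d p z * _ = _
  rw [corr_eq_convolution]
  simp only [convolution, ← integral_const_mul]
  refine integral_congr_ae (Filter.Eventually.of_forall fun w => ?_)
  have : chr d p z = chr d p w * chr d p (z - w) := by rw [← chr_add]; simp
  simp only [ContinuousLinearMap.mul_apply', this]
  ring

/-! ### Reduction of the covariance and Parseval's formula for the product -/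

theorem hcs_shear {d : ℕ} {φ₁ φ₂ : ℝ × Ed d → ℂ}
    (hc₁ : HasCompactSupport φ₁) (hc₂ : HasCompactSupport φ₂) :
    HasCompactSupport (fun p : (ℝ × Ed d) × (ℝ × Ed d) => φ₁ (p.1 + p.2) * φ₂ p.2) := by
  refine HasCompactSupport.intro (((hc₁.isCompact.prod hc₂.isCompact)).image
    (by fun_prop : Continuous fun p : (ℝ × Ed d) × (ℝ × Ed d) => (p.1 - p.2, p.2)))
    fun p hp => ?_
  by_contra h
  exact hp ⟨(p.1 + p.2, p.2), ⟨subset_tsupport _ (left_ne_zero_of_mul h),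
    subset_tsupport _ (right_ne_zero_of_mul h)⟩, by simp⟩

theorem Jcov_eq {d : ℕ} {γ : ℝ → ℝ≥0∞} {f : Ed d → ℝ≥0∞}
    (hγm : Measurable γ) (hfm : Measurable f)
    (hG : LocallyIntegrable fun z : ℝ × Ed d =>
      (((γ z.1).toReal : ℝ) : ℂ) * (((f z.2).toReal : ℝ) : ℂ))
    {φ₁ φ₂ : ℝ × Ed d → ℝ}
    (h₁s : Continuous φ₁) (h₁c : HasCompactSupport φ₁)
    (h₂s : Continuous φ₂) (h₂c : HasCompactSupport φ₂) :
    ((Jcov d γ f φ₁ φ₂ : ℝ) : ℂ) =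
      ∫ z : ℝ × Ed d, corr d (fun q => (φ₁ q : ℂ)) (fun q => (φ₂ q : ℂ)) z *
        ((((γ z.1).toReal : ℝ) : ℂ) * (((f z.2).toReal : ℝ) : ℂ)) := by
  have hmp := measurePreserving_add_prod (volume : Measure (ℝ × Ed d))
    (volume : Measure (ℝ × Ed d))
  have hc₁ : HasCompactSupport (fun q => (φ₁ q : ℂ)) := h₁c.comp_left Complex.ofReal_zero
  have hc₂ : HasCompactSupport (fun q => (φ₂ q : ℂ)) := h₂c.comp_left Complex.ofReal_zero
  have hG2 := locallyIntegrable_mul_prod hG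
    (locallyIntegrable_const (1 : ℂ) : LocallyIntegrable fun _ : ℝ × Ed d => (1 : ℂ))
  have hi := hG2.integrable_smul_left_of_hasCompactSupport
    (by fun_prop) (hcs_shear hc₁ hc₂)
  have hm : AEStronglyMeasurable (fun p : (ℝ × Ed d) × (ℝ × Ed d) =>
      (γ (p.1.1 - p.2.1)).toReal * (f (p.1.2 - p.2.2)).toReal * φ₁ p.1 * φ₂ p.2)
      (volume.prod volume) := by
    have := h₁s.measurable
    have := h₂s.measurable
    exact (by fun_prop : Measurable _).aestronglyMeasurable
  unfold Jcov
  rw [Measure.volume_eq_prod, ← hmp.map_eq, integral_map hmp.measurable.aemeasurable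
    (by rwa [hmp.map_eq])]
  refine integral_ofReal.symm.trans ?_
  rw [Measure.volume_eq_prod] at hi
  have h2 := integral_prod _ hi
  simp only [corr, ← integral_mul_const]
  refine Eq.trans ?_ (h2.trans ?_)
  · refine integral_congr_ae (Filter.Eventually.of_forall fun p => ?_)
    simp
    ring
  · simp

/-- Parseval's formula for the tensor product `γ ⊗ f` on `C_c^∞(ℝ × ℝ^d)`. -/
theorem parseval_prod {d : ℕ} {ν : Measure ℝ} {μ : Measure (Ed d)}
    (hμt : IsTempered d μ) {γ : ℝ → ℝ≥0∞} {f : Ed d → ℝ≥0∞}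
    (hγ : LocallyIntegrable fun t => (((γ t).toReal : ℝ) : ℂ))
    (hG : LocallyIntegrable fun z : ℝ × Ed d =>
      (((γ z.1).toReal : ℝ) : ℂ) * (((f z.2).toReal : ℝ) : ℂ))
    (hγν : ParsevalFT1 γ ν) (hfμ : ParsevalFT d f μ)
    {Φ : ℝ × Ed d → ℂ} (hs : ContDiff ℝ (⊤ : ℕ∞) Φ) (hc : HasCompactSupport Φ) :
    ∫ z : ℝ × Ed d, Φ z * ((((γ z.1).toReal : ℝ) : ℂ) * (((f z.2).toReal : ℝ) : ℂ)) =
      (((2 * π) ^ (d + 1) : ℝ)⁻¹ : ℂ) * ∫ ξ : Ed d, ∫ τ : ℝ, FTtd d Φ (τ, ξ) ∂ν ∂μ := by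
  have := hμt.sigmaFinite
  have hi := hG.integrable_smul_left_of_hasCompactSupport hs.continuous hc
  have hpc := (contDiff_pft hs hc)
  -- Parseval in the space variable, at fixed time
  have h1 (t : ℝ) : ∫ x, Φ (t, x) * ((((γ t).toReal : ℝ) : ℂ) * (((f x).toReal : ℝ) : ℂ)) =
      (((2 * π) ^ d : ℝ)⁻¹ : ℂ) * ∫ ξ, (((γ t).toReal : ℝ) : ℂ) * pft d Φ (t, ξ) ∂μ := by
    have h := hfμ (slice hs hc t)
    rw [integral_const_mul, mul_left_comm]
    refine Eq.trans ?_ (congrArg (fun c => (((γ t).toReal : ℝ) : ℂ) * c) h)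
    rw [← integral_const_mul]
    refine integral_congr_ae (Filter.Eventually.of_forall fun x => ?_)
    simp only [slice_apply]
    ring
  -- Parseval in the time variable, at fixed frequency
  have h2 (ξ : Ed d) : ∫ t, (((γ t).toReal : ℝ) : ℂ) * pft d Φ (t, ξ) =
      ((2 * π : ℝ)⁻¹ : ℂ) * ∫ τ, FTtd d Φ (τ, ξ) ∂ν := by
    have hcs : HasCompactSupport fun t => pft d Φ (t, ξ) :=
      HasCompactSupport.intro (hc.isCompact.image continuous_fst) fun t ht => pft_zero ht ξ
    have := hγν (hcs.toSchwartzMap (hpc.comp (contDiff_prodMk_left ξ)))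
    have h3 (τ : ℝ) : FT1 (fun t => pft d Φ (t, ξ)) τ = FTtd d Φ (τ, ξ) := by
      have h4 : Integrable (fun q => chr d (τ, ξ) q * Φ q) :=
        ((continuous_chr _).mul hs.continuous).integrable_of_hasCompactSupport hc.mul_left
      rw [Measure.volume_eq_prod] at h4
      refine Eq.trans ?_ (integral_prod _ h4).symm
      refine integral_congr_ae (Filter.Eventually.of_forall fun t => ?_)
      simp only [pft, FTd, ← integral_const_mul]
      refine integral_congr_ae (Filter.Eventually.of_forall fun x => ?_)
      simp only [chr, ← mul_assoc, ← Complex.exp_add]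
      congr 2
      push_cast
      ring
    simp_rw [← h3]
    refine Eq.trans ?_ this
    exact integral_congr_ae (Filter.Eventually.of_forall fun x => mul_comm _ _)
  -- integrability that allows exchanging the integrals in `t` and `ξ`
  have h5 : Integrable (fun p : ℝ × Ed d => (((γ p.1).toReal : ℝ) : ℂ) * pft d Φ p)
      (volume.prod μ) := by
    obtain ⟨k, hk⟩ := hμt.integrable
    obtain ⟨C, hC0, hC⟩ := pft_decay hs hc k
    have hK : IsCompact (Prod.fst '' tsupport Φ) := hc.isCompact.image continuous_fst
    have h6 := ((integrable_indicator_iff hK.measurableSet).2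
      (hγ.integrableOn_isCompact hK)).norm.mul_prod (hk.const_mul C)
    refine h6.mono' ?_ (Filter.Eventually.of_forall fun p => ?_)
    · exact (hγ.aestronglyMeasurable.comp_fst).mul hpc.continuous.aestronglyMeasurable
    · by_cases hp : p.1 ∈ Prod.fst '' tsupport Φ
      · rw [Set.indicator_of_mem hp, norm_mul]
        gcongr
        exact hC p
      · have : pft d Φ p = 0 := pft_zero hp p.2
        simp [Set.indicator_of_notMem hp, this]
  rw [Measure.volume_eq_prod] at hi ⊢
  refine (integral_prod _ hi).trans ?_
  simp only [smul_eq_mul, h1]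
  rw [integral_const_mul, integral_integral_swap h5]
  simp only [h2]
  rw [integral_const_mul]
  push_cast
  ring

/-- For `φ₁, φ₂ ∈ C_c^∞(ℝ^{1+d}; ℝ)`,
`J(φ₁,φ₂) = (2π)^{-(d+1)} ∫∫ ℱφ₁(τ,ξ) conj(ℱφ₂(τ,ξ)) ν(dτ) μ(dξ)`. -/
theorem stmt0 (d : ℕ) (ν : Measure ℝ) (μ : Measure (Ed d))
    (hνt : IsTempered1 ν) (hμt : IsTempered d μ)
    (γ : ℝ → ℝ≥0∞) (f : Ed d → ℝ≥0∞)
    (hγm : Measurable γ) (hfm : Measurable f)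
    (hγloc : LocIntENN1 γ) (hfloc : LocIntENN d f)
    (hγν : ParsevalFT1 γ ν) (hfμ : ParsevalFT d f μ)
    (φ₁ φ₂ : ℝ × Ed d → ℝ)
    (h₁s : ContDiff ℝ (⊤ : ℕ∞) φ₁) (h₁c : HasCompactSupport φ₁)
    (h₂s : ContDiff ℝ (⊤ : ℕ∞) φ₂) (h₂c : HasCompactSupport φ₂) :
    ((Jcov d γ f φ₁ φ₂ : ℝ) : ℂ) =
      (((2 * π) ^ (d + 1) : ℝ)⁻¹ : ℂ) *
        ∫ ξ : Ed d, ∫ τ : ℝ,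
          FTtd d (fun q => (φ₁ q : ℂ)) (τ, ξ) *
            (starRingEnd ℂ) (FTtd d (fun q => (φ₂ q : ℂ)) (τ, ξ)) ∂ν ∂μ := by
  have hγ := locallyIntegrable_toReal hγm hγloc
  have hf := locallyIntegrable_toReal hfm hfloc
  have hG := locallyIntegrable_mul_prod hγ hf
  have hs₁ : ContDiff ℝ (⊤ : ℕ∞) (fun q => (φ₁ q : ℂ)) := Complex.ofRealCLM.contDiff.comp h₁s
  have hs₂ : ContDiff ℝ (⊤ : ℕ∞) (fun q => (φ₂ q : ℂ)) := Complex.ofRealCLM.contDiff.comp h₂s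
  have hc₁ : HasCompactSupport (fun q => (φ₁ q : ℂ)) := h₁c.comp_left Complex.ofReal_zero
  have hc₂ : HasCompactSupport (fun q => (φ₂ q : ℂ)) := h₂c.comp_left Complex.ofReal_zero
  rw [Jcov_eq hγm hfm hG h₁s.continuous h₁c h₂s.continuous h₂c,
    parseval_prod hμt hγ hG hγν hfμ (contDiff_corr hs₁ hc₁ hs₂.continuous) (hcs_corr hc₁ hc₂)]
  simp only [FTtd_corr hs₁.continuous hc₁ hs₂.continuous hc₂ fun q => Complex.conj_ofReal _]
end
end

section
/- Let ν be a tempered Borel measure on ℝ and μ a tempered Borel measure on ℝ^d, and let γ : ℝ → [0,∞] and f : ℝ^d → [0,∞] be locally integrable functions that are the Fourier transforms of ν and μ respectively in the Parseval sense. Then the bilinear functional J(φ₁,φ₂) := ∫_{ℝ²×ℝ^{2d}} γ(t−s) f(x−y) φ₁(t,x) φ₂(s,y) dx dy dt ds is non-negative definite on C_c^∞(ℝ^{1+d}): for any n ≥ 1, any a₁,…,a_n ∈ ℂ and any φ₁,…,φ_n ∈ C_c^∞(ℝ^{1+d}; ℝ), the sum ∑_{j,k=1}^n a_j conj(a_k)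 J(φ_j,φ_k) is a nonnegative real number. -/
/-!
Put `Φ = ∑ j, a j * φ j`. By sesquilinearity the sum in question is
`∫ γ(t - s) f(x - y) Φ(t, x) conj Φ(s, y)`, so it suffices to see that this integral is a nonnegative
real number for every smooth compactly supported complex `Φ` (`integral_tensor_nonneg`).

If `g` is the Fourier transform of a measure `m`, testing against the correlation of `u` and `v`
gives `∫∫ g(x - y) u(x) conj v(y) = c ∫ 𝓕u conj 𝓕v dm` (`integral_kernel_eq`). Apply this first to
`f` and the slices `Φ(t, ·)`, `Φ(s, ·)`. With `U t ξ` the partial Fourier transform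
(`sliceFourier`), the integral becomes
`c₂ ∫∫ γ(t - s) (∫ U t ξ * conj (U s ξ) μ(dξ)) dt ds`.
After exchanging the order of integration, `t ↦ U t ξ` is again smooth with compact support, and the
same identity for `γ` gives `c₂ c₁ ∫∫ ‖𝓕(U · ξ)(τ)‖² ν(dτ) μ(dξ) ≥ 0`.

The exchange needs `∫ ‖U t ξ‖² μ(dξ)` to be finite and bounded in `t`. Finiteness is the temperedness
of `μ`; the uniform bound (`sliceFourier_sq_bound`) is the identity for `f` once more, combined with
the local integrability of `f`.
-/

open MeasureTheory Real
open scoped ENNReal RealInnerProductSpace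

noncomputable section

open FourierTransform Convolution

set_option linter.unusedSectionVars false

/-! ### Parseval identity for correlations -/

/-- `g` is, up to the real factor `c`, the Fourier transform of `μ` in the Parseval sense,
stated with Mathlib's normalisation `𝓕 φ ξ = ∫ e^{-2πi⟨x, ξ⟩} φ(x) dx`. The measure `μ` is
therefore the measure of the angular-frequency convention dilated by `(2π)⁻¹`, see
`isParseval_map`. -/
def IsParseval {E : Type*} [NormedAddCommGroup E] [InnerProductSpace ℝ E] [FiniteDimensional ℝ E]
    [MeasurableSpace E] [BorelSpace E] (g : E → ℝ) (μ : Measure E) (c : ℝ) : Prop :=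
  ∀ φ : SchwartzMap E ℂ, ∫ x, φ x * (g x : ℂ) = (c : ℂ) * ∫ ξ, 𝓕 (φ : E → ℂ) ξ ∂μ

section Kernel

variable {F : Type*} [NormedAddCommGroup F] [MeasurableSpace F] [BorelSpace F]
  [SecondCountableTopology F] [LocallyCompactSpace F]
  {m : Measure F} [m.IsAddHaarMeasure]

/-- Only the values of `G` on the compact set `supp u - supp v` matter, so `G` may be replaced by
an integrable function, and the integrand is then a bounded factor times a convolution
integrand. -/
theorem integrable_kernel {G : F → ℝ} (hG : LocallyIntegrable G m) {u v : F → ℂ}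
    (hu : Continuous u) (huc : HasCompactSupport u) (hv : Continuous v)
    (hvc : HasCompactSupport v) :
    Integrable (fun p : F × F => (G (p.1 - p.2) : ℂ) * (u p.1 * starRingEnd ℂ (v p.2)))
      (m.prod m) := by
  set S : Set F := (fun p : F × F => p.1 - p.2) '' (tsupport u ×ˢ tsupport v) with hS
  have hSc : IsCompact S := (huc.isCompact.prod hvc.isCompact).image (by fun_prop)
  have hG1 : Integrable (S.indicator fun x => (G x : ℂ)) m :=
    (integrable_indicator_iff hSc.measurableSet).2
      (hG.integrableOn_isCompact hSc).ofReal
  have hv1 : Integrable (fun y => starRingEnd ℂ (v y)) m :=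
    (Continuous.integrable_of_hasCompactSupport (by fun_prop) (hvc.comp_left (by simp)))
  have h := Integrable.convolution_integrand (ContinuousLinearMap.mul ℂ ℂ) hv1 hG1
  obtain ⟨C, hC⟩ := hu.bounded_above_of_compact_support huc
  have h2 := h.bdd_mul (f := fun p : F × F => u p.1) (c := C)
    (by fun_prop) (Filter.Eventually.of_forall fun p => hC p.1)
  refine h2.congr (Filter.Eventually.of_forall fun p => ?_)
  simp only [ContinuousLinearMap.mul_apply']
  by_cases hp : p.1 - p.2 ∈ S
  · rw [Set.indicator_of_mem hp]; ring
  · rw [Set.indicator_of_notMem hp]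
    have : u p.1 = 0 ∨ v p.2 = 0 := by
      by_contra! h0
      exact hp ⟨p, ⟨subset_tsupport _ h0.1, subset_tsupport _ h0.2⟩, rfl⟩
    rcases this with h0 | h0 <;> simp [h0]

end Kernel

section Pairing

variable {E : Type*} [NormedAddCommGroup E] [InnerProductSpace ℝ E] [FiniteDimensional ℝ E]
    [MeasurableSpace E] [BorelSpace E]

theorem fourier_conj_neg (v : E → ℂ) (ξ : E) :
    𝓕 (fun y => starRingEnd ℂ (v (-y))) ξ = starRingEnd ℂ (𝓕 v ξ) := by
  rw [Real.fourier_eq', Real.fourier_eq', ← integral_conj,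
    ← integral_neg_eq_self]
  congr 1
  ext y
  simp only [neg_neg, inner_neg_left, smul_eq_mul, map_mul, ← Complex.exp_conj, Complex.conj_I,
    Complex.conj_ofReal]
  congr 2
  push_cast
  ring

/-- The Parseval identity tested against the correlation `u ⋆ w` with `w(y) = conj v(-y)`, a smooth
function of compact support whose Fourier transform is `𝓕 u * conj (𝓕 v)`. -/
theorem integral_kernel_eq {g : E → ℝ} {μ : Measure E} {c : ℝ} (hP : IsParseval g μ c)
    (hg : LocallyIntegrable g volume) {u v : E → ℂ}
    (hu : ContDiff ℝ (⊤ : ℕ∞) u) (huc : HasCompactSupport u) (hv : ContDiff ℝ (⊤ : ℕ∞) v)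
    (hvc : HasCompactSupport v) :
    ∫ p : E × E, (g (p.1 - p.2) : ℂ) * (u p.1 * starRingEnd ℂ (v p.2)) =
      (c : ℂ) * ∫ ξ, 𝓕 u ξ * starRingEnd ℂ (𝓕 v ξ) ∂μ := by
  set w : E → ℂ := fun y => starRingEnd ℂ (v (-y)) with hw
  have hws : ContDiff ℝ (⊤ : ℕ∞) w :=
    Complex.conjCLE.contDiff.comp (hv.comp contDiff_neg)
  have hwc : HasCompactSupport w :=
    (hvc.comp_homeomorph (Homeomorph.neg E)).comp_left (g := starRingEnd ℂ) (by simp)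
  have hui : Integrable u := hu.continuous.integrable_of_hasCompactSupport huc
  have hwi : Integrable w := hws.continuous.integrable_of_hasCompactSupport hwc
  set H : E → ℂ := u ⋆[ContinuousLinearMap.mul ℂ ℂ] w with hH
  have hHs : ContDiff ℝ (⊤ : ℕ∞) H := by
    have := huc.contDiff_convolution_left (𝕜 := ℝ) (ContinuousLinearMap.mul ℝ ℂ) (μ := volume) hu
      hwi.locallyIntegrable
    exact this
  have hHc : HasCompactSupport H := huc.convolution _ hwc
  have h1 := hP (hHc.toSchwartzMap hHs)
  have h2 : ∀ ξ, 𝓕 ((hHc.toSchwartzMap hHs : SchwartzMap E ℂ) : E → ℂ) ξ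
      = 𝓕 u ξ * starRingEnd ℂ (𝓕 v ξ) := fun ξ => by
    rw [← fourier_conj_neg]
    exact Real.fourier_mul_convolution_eq hui hwi ξ
  simp only [h2] at h1
  rw [← h1]
  have hint := integrable_kernel (m := volume) hg hu.continuous huc hv.continuous hvc
  have hmp : MeasurePreserving (fun p : E × E => (p.1, p.1 - p.2))
      ((volume : Measure E).prod volume) (volume.prod volume) :=
    (MeasurePreserving.id _).skew_product (g := fun x y => x - y) (by fun_prop)
      (Filter.Eventually.of_forall fun x => Measure.map_sub_left_eq_self volume x)
  have hint' := hmp.integrable_comp_of_integrable hint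
  calc ∫ p : E × E, (g (p.1 - p.2) : ℂ) * (u p.1 * starRingEnd ℂ (v p.2))
      = ∫ x, ∫ y, (g (x - y) : ℂ) * (u x * starRingEnd ℂ (v y)) := integral_prod _ hint
    _ = ∫ x, ∫ z, (g z : ℂ) * (u x * w (z - x)) := by
        congr 1
        ext x
        rw [← integral_sub_left_eq_self _ volume x]
        simp [hw]
    _ = ∫ z, ∫ x, (g z : ℂ) * (u x * w (z - x)) := by
        refine integral_integral_swap (hint'.congr (Filter.Eventually.of_forall fun p => ?_))
        simp [hw, Function.uncurry]
    _ = _ := by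
        congr 1
        ext z
        rw [integral_const_mul, mul_comm]
        rfl

end Pairing

/-! ### Tempered measures and the change of Fourier normalisation -/

section Temperate

variable {E : Type*} [NormedAddCommGroup E] [InnerProductSpace ℝ E] [FiniteDimensional ℝ E]
    [MeasurableSpace E] [BorelSpace E]

/-- A superlevel set of the positive continuous integrable weight `(1 + ‖x‖) ^ (-n)` is a
neighbourhood of finite measure, so the measure is locally finite. -/
theorem sigmaFinite_of_hasTemperateGrowth (μ : Measure E) [hμ : μ.HasTemperateGrowth] :
    SigmaFinite μ := by
  obtain ⟨n, hn⟩ := hμ.exists_integrable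
  have hcont : Continuous fun x : E => (1 + ‖x‖) ^ (-(n : ℝ)) :=
    (continuous_const.add continuous_norm).rpow_const
      fun x => Or.inl (add_pos_of_pos_of_nonneg one_pos (norm_nonneg x)).ne'
  have : IsLocallyFiniteMeasure μ := by
    refine ⟨fun x => ⟨{y | (1 + ‖x‖) ^ (-(n : ℝ)) / 2 < (1 + ‖y‖) ^ (-(n : ℝ))}, ?_, ?_⟩⟩
    · refine (isOpen_lt continuous_const hcont).mem_nhds ?_
      have : 0 < (1 + ‖x‖) ^ (-(n : ℝ)) := by positivity
      simp only [Set.mem_ofPred_eq]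
      linarith
    · exact hn.measure_gt_lt_top (by positivity)
  infer_instance

/-- The weight in the definition of a tempered measure is `(1 + ‖ξ‖²) ^ (-k)`, while
`Measure.HasTemperateGrowth` uses `(1 + ‖ξ‖) ^ (-n)`; `n = 2k` compares the two, and the dilation
costs a factor `(2π) ^ (2k)`. -/
theorem hasTemperateGrowth_map_smul {μ : Measure E} {k : ℕ}
    (h : ∫⁻ ξ, ENNReal.ofReal ((1 + ‖ξ‖ ^ 2) ^ (-(k : ℝ))) ∂μ < ⊤) :
    (μ.map fun ξ => (2 * π)⁻¹ • ξ).HasTemperateGrowth := by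
  have h2π : (1 : ℝ) ≤ 2 * π := by linarith [Real.two_le_pi]
  have hcont : ∀ m : ℕ, Continuous fun x : E => (1 + ‖x‖) ^ (-(m : ℝ)) := fun m =>
    (continuous_const.add continuous_norm).rpow_const
      fun x => Or.inl (add_pos_of_pos_of_nonneg one_pos (norm_nonneg x)).ne'
  have hcont2 : Continuous fun x : E => (1 + ‖x‖ ^ 2) ^ (-(k : ℝ)) :=
    (continuous_const.add (continuous_norm.pow 2)).rpow_const
      fun x => Or.inl (add_pos_of_pos_of_nonneg one_pos (sq_nonneg ‖x‖)).ne'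
  have hi : Integrable (fun ξ : E => (1 + ‖ξ‖ ^ 2) ^ (-(k : ℝ))) μ := by
    refine ⟨hcont2.aestronglyMeasurable, ?_⟩
    rw [hasFiniteIntegral_iff_ofReal (Filter.Eventually.of_forall fun x => by positivity)]
    exact h
  refine ⟨2 * k, ?_⟩
  rw [integrable_map_measure (hcont _).aestronglyMeasurable (by fun_prop)]
  refine (hi.const_mul ((2 * π) ^ (2 * k))).mono'
    ((hcont _).comp (by fun_prop)).aestronglyMeasurable
    (Filter.Eventually.of_forall fun ξ => ?_)
  have e : ‖(2 * π)⁻¹ • ξ‖ = (2 * π)⁻¹ * ‖ξ‖ := by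
    rw [norm_smul, Real.norm_of_nonneg (by positivity)]
  simp only [Function.comp_apply, e]
  rw [Real.norm_of_nonneg (by positivity), Real.rpow_neg (by positivity),
    Real.rpow_neg (by positivity), Real.rpow_natCast, Real.rpow_natCast, pow_mul, pow_mul,
    ← inv_pow, ← inv_pow _ k, ← mul_pow]
  gcongr
  rw [← div_eq_mul_inv, le_div_iff₀ (by positivity), inv_mul_le_iff₀ (by positivity)]
  have hr := norm_nonneg ξ
  have : (1 + (2 * π)⁻¹ * ‖ξ‖) ^ 2 * (2 * π) ^ 2 = (2 * π + ‖ξ‖) ^ 2 := by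
    field_simp
  rw [this]
  nlinarith

/-- Passage from the convention `e^{-i⟨ξ, x⟩}` to Mathlib's `e^{-2πi⟨x, ξ⟩}` by dilating the
measure. -/
theorem isParseval_map {g : E → ℝ} {μ : Measure E} {c : ℝ}
    (h : ∀ φ : SchwartzMap E ℂ, ∫ x, φ x * (g x : ℂ) =
      (c : ℂ) * ∫ ξ, (∫ x, Complex.exp (-(Complex.I * ((⟪ξ, x⟫ : ℝ) : ℂ))) * φ x) ∂μ) :
    IsParseval g (μ.map fun ξ => (2 * π)⁻¹ • ξ) c := by
  intro φ
  rw [h φ]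
  have hπ : (2 * π)⁻¹ ≠ 0 := by positivity
  have hemb : MeasurableEmbedding fun ξ : E => (2 * π)⁻¹ • ξ :=
    (Homeomorph.smulOfNeZero (2 * π)⁻¹ hπ).measurableEmbedding
  rw [hemb.integral_map]
  congr 2
  ext ξ
  rw [Real.fourier_eq']
  congr 1
  ext x
  rw [smul_eq_mul]
  congr 2
  rw [inner_smul_right, real_inner_comm x ξ]
  have : -2 * π * ((2 * π)⁻¹ * ⟪x, ξ⟫) = -⟪x, ξ⟫ := by
    field_simp
  rw [this]
  push_cast
  ring

end Temperate

/-! ### Partial Fourier transform -/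

section Slices

theorem exists_cutoff {X : Type*} [TopologicalSpace X] [RegularSpace X] [LocallyCompactSpace X]
    {K : Set X} (hK : IsCompact K) :
    ∃ χ : X → ℝ, Continuous χ ∧ HasCompactSupport χ ∧ (∀ x, 0 ≤ χ x) ∧ ∀ x ∈ K, χ x = 1 := by
  obtain ⟨χ, h1, -, h3, h4⟩ := exists_continuous_one_zero_of_isCompact hK
    isClosed_empty (Set.disjoint_empty K)
  exact ⟨χ, χ.continuous, h3, fun x => (h4 x).1, h1⟩

variable {A E : Type*} [NormedAddCommGroup A] [InnerProductSpace ℝ A] [FiniteDimensional ℝ A]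
    [MeasurableSpace A] [BorelSpace A]
    [NormedAddCommGroup E] [InnerProductSpace ℝ E] [FiniteDimensional ℝ E]
    [MeasurableSpace E] [BorelSpace E]

/-- The partial Fourier transform of `Φ` in its second variable: `sliceFourier Φ t ξ` is the Fourier
transform at `ξ` of the slice `x ↦ Φ (t, x)`, in Mathlib's normalisation. -/
def sliceFourier (Φ : A × E → ℂ) (t : A) (ξ : E) : ℂ := 𝓕 (fun x => Φ (t, x)) ξ

variable {Φ : A × E → ℂ}

theorem slice_contDiff (hΦ : ContDiff ℝ (⊤ : ℕ∞) Φ) (t : A) :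
    ContDiff ℝ (⊤ : ℕ∞) fun x => Φ (t, x) :=
  hΦ.comp (contDiff_const.prodMk contDiff_id)

theorem slice_hasCompactSupport (hc : HasCompactSupport Φ) (t : A) :
    HasCompactSupport fun x => Φ (t, x) :=
  HasCompactSupport.intro (hc.isCompact.image continuous_snd) fun _ hx =>
    image_eq_zero_of_notMem_tsupport fun h => hx ⟨_, h, rfl⟩

theorem sliceFourier_eq_zero {t : A} (ht : t ∉ Prod.fst '' tsupport Φ) (ξ : E) :
    sliceFourier Φ t ξ = 0 := by
  have : (fun x : E => Φ (t, x)) = fun _ => 0 := by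
    ext x
    exact image_eq_zero_of_notMem_tsupport fun h => ht ⟨_, h, rfl⟩
  rw [sliceFourier, this, Real.fourier_eq]
  simp

theorem sliceFourier_hasCompactSupport (hc : HasCompactSupport Φ) (ξ : E) :
    HasCompactSupport fun t => sliceFourier Φ t ξ :=
  HasCompactSupport.intro (hc.isCompact.image continuous_fst) fun _ ht =>
    sliceFourier_eq_zero ht ξ

theorem sliceFourier_stronglyMeasurable (hΦ : Continuous Φ) :
    StronglyMeasurable fun q : A × E => sliceFourier Φ q.1 q.2 := by
  have : Continuous fun z : (A × E) × E =>
      Complex.exp ((↑(-2 * π * ⟪z.2, z.1.2⟫) * Complex.I)) • Φ (z.1.1, z.2) := by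
    fun_prop
  have h := this.stronglyMeasurable.integral_prod_right' (ν := (volume : Measure E))
  simpa only [sliceFourier, Real.fourier_eq'] using h

/-- The integral is the value at `0` of the convolution of the character `x ↦ e^{-2πi⟨x, ξ⟩}` with
the reflected slice `z ↦ Φ (t, -z)`, so smoothness in `t` is smooth dependence of a convolution on
a parameter. -/
theorem sliceFourier_contDiff (hΦ : ContDiff ℝ (⊤ : ℕ∞) Φ) (hc : HasCompactSupport Φ) (ξ : E) :
    ContDiff ℝ (⊤ : ℕ∞) fun t => sliceFourier Φ t ξ := by
  set e : E → ℂ := fun x => Complex.exp ((↑(-2 * π * ⟪x, ξ⟫) * Complex.I)) with he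
  have hec : Continuous e := by fun_prop
  have hK : IsCompact ((fun p : A × E => -p.2) '' tsupport Φ) :=
    hc.isCompact.image (by fun_prop)
  have h := contDiffOn_convolution_right_with_param_comp (𝕜 := ℝ) (n := (⊤ : ℕ∞))
    (ContinuousLinearMap.mul ℝ ℂ) (s := (Set.univ : Set A)) (v := fun _ => (0 : E))
    (μ := (volume : Measure E)) (f := e) (g := fun t z => Φ (t, -z)) contDiffOn_const
    isOpen_univ hK
    (fun t z _ hz => image_eq_zero_of_notMem_tsupport fun h => hz ⟨_, h, by simp⟩)
    hec.locallyIntegrable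
    (ContDiff.contDiffOn (hΦ.comp (contDiff_fst.prodMk contDiff_snd.neg)))
  rw [contDiffOn_univ] at h
  convert h using 1
  ext t
  rw [sliceFourier, Real.fourier_eq', convolution_def]
  simp [he]

variable {μ : Measure E} [μ.HasTemperateGrowth]

theorem sliceFourier_memLp_two (hΦ : ContDiff ℝ (⊤ : ℕ∞) Φ) (hc : HasCompactSupport Φ)
    (t : A) : MemLp (sliceFourier Φ t) 2 μ := by
  let φ : SchwartzMap E ℂ :=
    (slice_hasCompactSupport hc t).toSchwartzMap (slice_contDiff hΦ t)
  exact (𝓕 φ).memLp 2 μ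

theorem sliceFourier_integrable_sq (hΦ : ContDiff ℝ (⊤ : ℕ∞) Φ) (hc : HasCompactSupport Φ)
    (t : A) : Integrable (fun ξ => ‖sliceFourier Φ t ξ‖ ^ 2) μ :=
  have h := sliceFourier_memLp_two hΦ hc t
  (memLp_two_iff_integrable_sq_norm h.aestronglyMeasurable).1 h

theorem sliceFourier_integrable_mul (hΦ : ContDiff ℝ (⊤ : ℕ∞) Φ) (hc : HasCompactSupport Φ)
    (t s : A) :
    Integrable (fun ξ => sliceFourier Φ t ξ * starRingEnd ℂ (sliceFourier Φ s ξ)) μ :=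
  (sliceFourier_memLp_two hΦ hc t).integrable_mul (sliceFourier_memLp_two hΦ hc s).star

/-- By `integral_kernel_eq` the integral is `c⁻¹ ∫∫ f(x - y) Φ(t, x) conj Φ(t, y)`, which is bounded
uniformly in `t` because all slices are dominated by one compactly supported function. -/
theorem sliceFourier_sq_bound {f : E → ℝ} {c : ℝ} (hc0 : 0 < c) (hP : IsParseval f μ c)
    (hf : LocallyIntegrable f volume) (hΦ : ContDiff ℝ (⊤ : ℕ∞) Φ) (hc : HasCompactSupport Φ) :
    ∃ M : ℝ, 0 ≤ M ∧ ∀ t, ∫ ξ, ‖sliceFourier Φ t ξ‖ ^ 2 ∂μ ≤ M := by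
  obtain ⟨C, hC⟩ := hΦ.continuous.bounded_above_of_compact_support hc
  set K : Set E := Prod.snd '' tsupport Φ with hK
  have hKc : IsCompact K := hc.isCompact.image continuous_snd
  obtain ⟨χ, hχs, hχc, hχ, hχ1⟩ := exists_cutoff hKc
  have hχc' : HasCompactSupport fun x => (χ x : ℂ) :=
    hχc.comp_left (g := fun r : ℝ => (r : ℂ)) (by simp)
  have hint := (integrable_kernel (m := volume) hf (u := fun x => (χ x : ℂ))
    (v := fun x => (χ x : ℂ)) (by fun_prop) hχc' (by fun_prop) hχc').norm.const_mul (C ^ 2)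
  have hb : ∀ t x, ‖Φ (t, x)‖ ≤ C * χ x := fun t x => by
    have hC0 : 0 ≤ C := (norm_nonneg _).trans (hC (t, x))
    by_cases hx : x ∈ K
    · simpa [hχ1 x hx] using hC (t, x)
    · rw [image_eq_zero_of_notMem_tsupport fun h => hx ⟨_, h, rfl⟩, norm_zero]
      exact mul_nonneg hC0 (hχ x)
  set M₀ := ∫ p : E × E, C ^ 2 * ‖(f (p.1 - p.2) : ℂ) *
    ((χ p.1 : ℂ) * starRingEnd ℂ (χ p.2 : ℂ))‖ with hM₀
  refine ⟨M₀ / c, div_nonneg (integral_nonneg fun p => by positivity) hc0.le, fun t => ?_⟩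
  have key := integral_kernel_eq hP hf (slice_contDiff hΦ t) (slice_hasCompactSupport hc t)
    (slice_contDiff hΦ t) (slice_hasCompactSupport hc t)
  have hsq : ∀ ξ, 𝓕 (fun x => Φ (t, x)) ξ * starRingEnd ℂ (𝓕 (fun x => Φ (t, x)) ξ) =
      ((‖sliceFourier Φ t ξ‖ ^ 2 : ℝ) : ℂ) := fun ξ => by
    rw [Complex.mul_conj, Complex.normSq_eq_norm_sq]
    rfl
  simp only [hsq] at key
  rw [integral_complex_ofReal, ← Complex.ofReal_mul] at key
  rw [le_div_iff₀ hc0, mul_comm]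
  calc c * ∫ ξ, ‖sliceFourier Φ t ξ‖ ^ 2 ∂μ
      ≤ ‖((c * ∫ ξ, ‖sliceFourier Φ t ξ‖ ^ 2 ∂μ : ℝ) : ℂ)‖ := by
        rw [Complex.norm_real]
        exact le_abs_self _
    _ ≤ M₀ := by
        rw [← key]
        refine norm_integral_le_of_norm_le hint (Filter.Eventually.of_forall fun p => ?_)
        simp only [norm_mul, RCLike.norm_conj, Complex.norm_real, Real.norm_of_nonneg (hχ _)]
        calc ‖f (p.1 - p.2)‖ * (‖Φ (t, p.1)‖ * ‖Φ (t, p.2)‖)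
            ≤ ‖f (p.1 - p.2)‖ * ((C * χ p.1) * (C * χ p.2)) := by
              gcongr
              · exact (norm_nonneg _).trans (hb t p.1)
              · exact hb t p.1
              · exact hb t p.2
          _ = _ := by ring

end Slices

/-! ### Positivity of the tensor kernel -/

section Main

/-- Regrouping `((t, s), (x, y))` as `((t, x), (s, y))` preserves the product measures. -/
theorem measurePreserving_middleSwap {α β γ δ : Type*} [MeasurableSpace α] [MeasurableSpace β]
    [MeasurableSpace γ] [MeasurableSpace δ] (a : Measure α) (b : Measure β) (c : Measure γ)
    (d : Measure δ) [SFinite a] [SFinite b] [SFinite c] [SFinite d] :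
    MeasurePreserving (fun p : (α × γ) × (β × δ) => ((p.1.1, p.2.1), (p.1.2, p.2.2)))
      ((a.prod c).prod (b.prod d)) ((a.prod b).prod (c.prod d)) := by
  have h1 := measurePreserving_prodAssoc a c (b.prod d)
  have h2 := (MeasurePreserving.id a).prod
    (measurePreserving_prodAssoc c b d).symm
  have h3 := (MeasurePreserving.id a).prod
    ((Measure.measurePreserving_swap (μ := c) (ν := b)).prod (MeasurePreserving.id d))
  have h4 := (MeasurePreserving.id a).prod (measurePreserving_prodAssoc b c d)
  have h5 := (measurePreserving_prodAssoc a b (c.prod d)).symm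
  exact h5.comp (h4.comp (h3.comp (h2.comp h1)))

variable {A E : Type*} [NormedAddCommGroup A] [InnerProductSpace ℝ A] [FiniteDimensional ℝ A]
    [MeasurableSpace A] [BorelSpace A]
    [NormedAddCommGroup E] [InnerProductSpace ℝ E] [FiniteDimensional ℝ E]
    [MeasurableSpace E] [BorelSpace E]

theorem locallyIntegrable_tensor {γ : A → ℝ} {f : E → ℝ} (hγ : LocallyIntegrable γ volume)
    (hf : LocallyIntegrable f volume) :
    LocallyIntegrable (fun q : A × E => γ q.1 * f q.2) volume := by
  rw [locallyIntegrable_iff]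
  intro K hK
  have h := (hγ.integrableOn_isCompact (hK.image continuous_fst)).mul_prod
    (hf.integrableOn_isCompact (hK.image continuous_snd))
  rw [Measure.prod_restrict] at h
  exact IntegrableOn.mono_set h fun q hq => ⟨⟨q, hq, rfl⟩, ⟨q, hq, rfl⟩⟩

theorem measurable_kernel_mul {γ : A → ℝ} (hγm : Measurable γ) {U : A → E → ℂ}
    (hU : Measurable fun q : A × E => U q.1 q.2) :
    Measurable fun z : (A × A) × E =>
      (γ (z.1.1 - z.1.2) : ℂ) * (U z.1.1 z.2 * starRingEnd ℂ (U z.1.2 z.2)) := by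
  have hu1 : Measurable fun z : (A × A) × E => U z.1.1 z.2 :=
    hU.comp ((measurable_fst.comp measurable_fst).prodMk measurable_snd)
  have hu2 : Measurable fun z : (A × A) × E => U z.1.2 z.2 :=
    hU.comp ((measurable_snd.comp measurable_fst).prodMk measurable_snd)
  have hg : Measurable fun z : (A × A) × E => (γ (z.1.1 - z.1.2) : ℂ) :=
    Complex.measurable_ofReal.comp (hγm.comp (by fun_prop))
  exact hg.mul (hu1.mul (Complex.continuous_conj.measurable.comp hu2))

/-- Absolute convergence of the triple integral in `integral_tensor_nonneg`: by `2ab ≤ a² + b²` and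
`sliceFourier_sq_bound` the inner integral over `μ` is bounded uniformly in `(t, s)`, and vanishes
unless `t` and `s` both lie in the compact projection of the support of `Φ`. -/
theorem integrable_kernel_sliceFourier {γ : A → ℝ} {f : E → ℝ} {μ : Measure E}
    [μ.HasTemperateGrowth] [SFinite μ] {c : ℝ} (hc₀ : 0 < c)
    (hfP : IsParseval f μ c) (hγm : Measurable γ)
    (hγ : LocallyIntegrable γ volume) (hf : LocallyIntegrable f volume)
    {Φ : A × E → ℂ} (hΦ : ContDiff ℝ (⊤ : ℕ∞) Φ) (hc : HasCompactSupport Φ) :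
    Integrable (fun z : (A × A) × E => (γ (z.1.1 - z.1.2) : ℂ) *
      (sliceFourier Φ z.1.1 z.2 * starRingEnd ℂ (sliceFourier Φ z.1.2 z.2)))
      (((volume : Measure A).prod volume).prod μ) := by
  obtain ⟨M, hM0, hM⟩ := sliceFourier_sq_bound hc₀ hfP hf hΦ hc
  obtain ⟨χ, hχs, hχc, hχ, hχ1⟩ := exists_cutoff (hc.isCompact.image continuous_fst)
  have hχc' : HasCompactSupport fun x => (χ x : ℂ) :=
    hχc.comp_left (g := fun r : ℝ => (r : ℂ)) (by simp)
  have hbd := (integrable_kernel (m := volume) hγ (u := fun x => (χ x : ℂ))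
    (v := fun x => (χ x : ℂ)) (by fun_prop) hχc' (by fun_prop) hχc').norm.mul_const M
  have hmeas : AEStronglyMeasurable (fun z : (A × A) × E => (γ (z.1.1 - z.1.2) : ℂ) *
      (sliceFourier Φ z.1.1 z.2 * starRingEnd ℂ (sliceFourier Φ z.1.2 z.2)))
      (((volume : Measure A).prod volume).prod μ) :=
    (measurable_kernel_mul hγm (U := sliceFourier Φ)
      (sliceFourier_stronglyMeasurable hΦ.continuous).measurable).aestronglyMeasurable
  rw [integrable_prod_iff hmeas]
  refine ⟨Filter.Eventually.of_forall fun a =>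
    (sliceFourier_integrable_mul hΦ hc a.1 a.2).const_mul (γ (a.1 - a.2) : ℂ),
    hbd.mono' hmeas.norm.integral_prod_right' (Filter.Eventually.of_forall fun a => ?_)⟩
  rw [Real.norm_of_nonneg (integral_nonneg fun _ => norm_nonneg _)]
  simp only [norm_mul, RCLike.norm_conj, Complex.norm_real, Real.norm_of_nonneg (hχ _)]
  rw [integral_const_mul, mul_assoc]
  refine mul_le_mul_of_nonneg_left ?_ (norm_nonneg _)
  by_cases h1 : a.1 ∈ Prod.fst '' tsupport Φ
  · by_cases h2 : a.2 ∈ Prod.fst '' tsupport Φ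
    · rw [hχ1 _ h1, hχ1 _ h2, one_mul, one_mul]
      have i1 := sliceFourier_integrable_sq hΦ hc a.1 (μ := μ)
      have i2 := sliceFourier_integrable_sq hΦ hc a.2 (μ := μ)
      calc ∫ ξ, ‖sliceFourier Φ a.1 ξ‖ * ‖sliceFourier Φ a.2 ξ‖ ∂μ
          ≤ ∫ ξ, (‖sliceFourier Φ a.1 ξ‖ ^ 2 + ‖sliceFourier Φ a.2 ξ‖ ^ 2) / 2 ∂μ := by
            refine integral_mono_of_nonneg (Filter.Eventually.of_forall fun ξ => by positivity)
              ((i1.add i2).div_const 2) (Filter.Eventually.of_forall fun ξ => ?_)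
            have := two_mul_le_add_sq ‖sliceFourier Φ a.1 ξ‖ ‖sliceFourier Φ a.2 ξ‖
            simp only
            linarith
        _ ≤ M := by
            rw [integral_div, integral_add i1 i2]
            linarith [hM a.1, hM a.2]
    · simp only [sliceFourier_eq_zero h2, norm_zero, mul_zero, integral_zero]
      exact mul_nonneg (mul_nonneg (hχ _) (hχ _)) hM0
  · simp only [sliceFourier_eq_zero h1, norm_zero, zero_mul, integral_zero]
    exact mul_nonneg (mul_nonneg (hχ _) (hχ _)) hM0

/-- Applying `integral_kernel_eq` in the second variable for fixed `(t, s)`, exchanging the order of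
integration, and applying it again in the first variable for fixed `ξ` turns the integral into
`c₂ c₁ ∫∫ ‖𝓕 (t ↦ sliceFourier Φ t ξ) τ‖² ν(dτ) μ(dξ)`. -/
theorem integral_tensor_nonneg {γ : A → ℝ} {f : E → ℝ} {ν : Measure A} {μ : Measure E}
    [μ.HasTemperateGrowth] {c₁ c₂ : ℝ} (hc₁ : 0 ≤ c₁) (hc₂ : 0 < c₂)
    (hγP : IsParseval γ ν c₁) (hfP : IsParseval f μ c₂) (hγm : Measurable γ)
    (hγ : LocallyIntegrable γ volume) (hf : LocallyIntegrable f volume)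
    {Φ : A × E → ℂ} (hΦ : ContDiff ℝ (⊤ : ℕ∞) Φ) (hc : HasCompactSupport Φ) :
    ∃ r : ℝ, 0 ≤ r ∧ ∫ p : (A × E) × (A × E),
      ((γ (p.1.1 - p.2.1) * f (p.1.2 - p.2.2) : ℝ) : ℂ) * (Φ p.1 * starRingEnd ℂ (Φ p.2)) = r := by
  have hσ := sigmaFinite_of_hasTemperateGrowth μ
  -- Instance search does not see through the product structure on `volume`.
  have hHaar : (volume : Measure (A × E)).IsAddHaarMeasure :=
    Measure.prod.instIsAddHaarMeasure (volume : Measure A) (volume : Measure E)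
  have hint := integrable_kernel (m := (volume : Measure (A × E)))
    (locallyIntegrable_tensor hγ hf) hΦ.continuous hc hΦ.continuous hc
  have hmp := measurePreserving_middleSwap (volume : Measure A) (volume : Measure E)
    (volume : Measure A) (volume : Measure E)
  have hint2 := hmp.integrable_comp_of_integrable hint
  have hint3 := integrable_kernel_sliceFourier hc₂ hfP hγm hγ hf hΦ hc
  refine ⟨c₂ * ∫ ξ, (c₁ * ∫ τ, ‖𝓕 (fun t => sliceFourier Φ t ξ) τ‖ ^ 2 ∂ν) ∂μ,
    mul_nonneg hc₂.le (integral_nonneg fun ξ =>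
      mul_nonneg hc₁ (integral_nonneg fun τ => by positivity)), ?_⟩
  have hin : ∀ ξ, ∫ a : A × A, (γ (a.1 - a.2) : ℂ) *
      (sliceFourier Φ a.1 ξ * starRingEnd ℂ (sliceFourier Φ a.2 ξ)) =
      ((c₁ * ∫ τ, ‖𝓕 (fun t => sliceFourier Φ t ξ) τ‖ ^ 2 ∂ν : ℝ) : ℂ) := fun ξ => by
    rw [integral_kernel_eq hγP hγ (sliceFourier_contDiff hΦ hc ξ)
      (sliceFourier_hasCompactSupport hc ξ) (sliceFourier_contDiff hΦ hc ξ)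
      (sliceFourier_hasCompactSupport hc ξ), Complex.ofReal_mul, ← integral_complex_ofReal]
    simp only [Complex.mul_conj, Complex.normSq_eq_norm_sq]
  calc ∫ p : (A × E) × (A × E), ((γ (p.1.1 - p.2.1) * f (p.1.2 - p.2.2) : ℝ) : ℂ) *
        (Φ p.1 * starRingEnd ℂ (Φ p.2))
      = ∫ q : (A × A) × (E × E), ((γ (q.1.1 - q.1.2) * f (q.2.1 - q.2.2) : ℝ) : ℂ) *
        (Φ (q.1.1, q.2.1) * starRingEnd ℂ (Φ (q.1.2, q.2.2))) := by
        have h := integral_map hmp.aemeasurable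
          (hmp.map_eq.symm ▸ hint.aestronglyMeasurable)
        rw [hmp.map_eq] at h
        exact h
    _ = ∫ a : A × A, ∫ e : E × E, ((γ (a.1 - a.2) * f (e.1 - e.2) : ℝ) : ℂ) *
        (Φ (a.1, e.1) * starRingEnd ℂ (Φ (a.2, e.2))) := integral_prod _ hint2
    _ = ∫ a : A × A, (c₂ : ℂ) * ∫ ξ, (γ (a.1 - a.2) : ℂ) *
        (sliceFourier Φ a.1 ξ * starRingEnd ℂ (sliceFourier Φ a.2 ξ)) ∂μ := by
        congr 1
        ext a
        simp only [Complex.ofReal_mul, mul_assoc]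
        rw [integral_const_mul, integral_kernel_eq hfP hf (slice_contDiff hΦ a.1)
          (slice_hasCompactSupport hc a.1) (slice_contDiff hΦ a.2)
          (slice_hasCompactSupport hc a.2), integral_const_mul, mul_left_comm]
        rfl
    _ = (c₂ : ℂ) * ∫ ξ, (∫ a : A × A, (γ (a.1 - a.2) : ℂ) *
        (sliceFourier Φ a.1 ξ * starRingEnd ℂ (sliceFourier Φ a.2 ξ))) ∂μ := by
        rw [integral_const_mul]
        congr 1
        exact integral_integral_swap hint3
    _ = _ := by
        simp only [hin]
        rw [integral_complex_ofReal, ← Complex.ofReal_mul]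

end Main

/-- The bilinear functional `J` is non-negative definite on
`C_c^∞(ℝ^{1+d}; ℝ)`: for any `a₁,…,a_n ∈ ℂ` and `φ₁,…,φ_n ∈ C_c^∞(ℝ^{1+d}; ℝ)`, the sum
`∑_{j,k} a_j conj(a_k) J(φ_j,φ_k)` is a nonnegative real number. -/
theorem stmt1 (d : ℕ) (ν : Measure ℝ) (μ : Measure (Ed d))
    (hνt : IsTempered1 ν) (hμt : IsTempered d μ)
    (γ : ℝ → ℝ≥0∞) (f : Ed d → ℝ≥0∞)
    (hγm : Measurable γ) (hfm : Measurable f)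
    (hγloc : LocIntENN1 γ) (hfloc : LocIntENN d f)
    (hγν : ParsevalFT1 γ ν) (hfμ : ParsevalFT d f μ)
    (n : ℕ) (hn : 1 ≤ n) (a : Fin n → ℂ) (φ : Fin n → ℝ × Ed d → ℝ)
    (hφs : ∀ j, ContDiff ℝ (⊤ : ℕ∞) (φ j)) (hφc : ∀ j, HasCompactSupport (φ j)) :
    0 ≤ (∑ j : Fin n, ∑ k : Fin n,
          a j * (starRingEnd ℂ) (a k) * ((Jcov d γ f (φ j) (φ k) : ℝ) : ℂ)).re ∧
      (∑ j : Fin n, ∑ k : Fin n,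
          a j * (starRingEnd ℂ) (a k) * ((Jcov d γ f (φ j) (φ k) : ℝ) : ℂ)).im = 0 := by
  set g : ℝ → ℝ := fun t => (γ t).toReal with hg
  set h : Ed d → ℝ := fun x => (f x).toReal with hh
  have hgl : LocallyIntegrable g volume := locallyIntegrable_iff.2 fun K hK =>
    integrable_toReal_of_lintegral_ne_top hγm.aemeasurable (hγloc K hK).ne
  have hhl : LocallyIntegrable h volume := locallyIntegrable_iff.2 fun K hK =>
    integrable_toReal_of_lintegral_ne_top hfm.aemeasurable (hfloc K hK).ne
  have hPg : IsParseval g (ν.map fun ξ => (2 * π)⁻¹ • ξ) (2 * π)⁻¹ := by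
    refine isParseval_map fun ψ => ?_
    have hin : ∀ x y : ℝ, ⟪x, y⟫ = x * y := fun x y => by simp [mul_comm]
    rw [hγν ψ]
    simp only [FT1, hin, Complex.ofReal_inv]
  have hPh : IsParseval h (μ.map fun ξ => (2 * π)⁻¹ • ξ) ((2 * π) ^ d)⁻¹ := by
    refine isParseval_map fun ψ => ?_
    rw [hfμ ψ]
    simp only [FTd, Complex.ofReal_inv]
  obtain ⟨k, hk⟩ := hμt
  have hμ' := hasTemperateGrowth_map_smul hk
  set ψ : Fin n → ℝ × Ed d → ℂ := fun j p => (φ j p : ℂ) with hψ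
  have hψs : ∀ j, ContDiff ℝ (⊤ : ℕ∞) (ψ j) := fun j => Complex.ofRealCLM.contDiff.comp (hφs j)
  have hψc : ∀ j, HasCompactSupport (ψ j) := fun j =>
    (hφc j).comp_left (g := fun r : ℝ => (r : ℂ)) (by simp)
  set Φ : ℝ × Ed d → ℂ := fun p => ∑ j, a j * ψ j p with hΦ
  have hΦs : ContDiff ℝ (⊤ : ℕ∞) Φ := ContDiff.sum fun j _ => contDiff_const.mul (hψs j)
  have hΦc : HasCompactSupport Φ := by
    refine HasCompactSupport.intro (isCompact_iUnion fun j => (hψc j).isCompact) fun p hp => ?_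
    refine Finset.sum_eq_zero fun j _ => ?_
    rw [image_eq_zero_of_notMem_tsupport fun h => hp (Set.mem_iUnion.2 ⟨j, h⟩), mul_zero]
  have hHaar : (volume : Measure (ℝ × Ed d)).IsAddHaarMeasure :=
    Measure.prod.instIsAddHaarMeasure (volume : Measure ℝ) (volume : Measure (Ed d))
  obtain ⟨r, hr, hI⟩ := integral_tensor_nonneg (by positivity) (by positivity) hPg hPh
    hγm.ennreal_toReal hgl hhl hΦs hΦc
  have hsum : ∑ j : Fin n, ∑ k : Fin n,
      a j * (starRingEnd ℂ) (a k) * ((Jcov d γ f (φ j) (φ k) : ℝ) : ℂ) = r := by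
    have hint : ∀ j k, Integrable (fun p : (ℝ × Ed d) × (ℝ × Ed d) =>
        a j * starRingEnd ℂ (a k) * (((g (p.1.1 - p.2.1) * h (p.1.2 - p.2.2) : ℝ) : ℂ) *
          (ψ j p.1 * starRingEnd ℂ (ψ k p.2)))) := fun j k =>
      (integrable_kernel (locallyIntegrable_tensor hgl hhl) (hψs j).continuous (hψc j)
        (hψs k).continuous (hψc k)).const_mul _
    rw [← hI]
    calc ∑ j : Fin n, ∑ k : Fin n,
          a j * (starRingEnd ℂ) (a k) * ((Jcov d γ f (φ j) (φ k) : ℝ) : ℂ)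
        = ∑ j : Fin n, ∑ k : Fin n, ∫ p : (ℝ × Ed d) × (ℝ × Ed d),
            a j * starRingEnd ℂ (a k) * (((g (p.1.1 - p.2.1) * h (p.1.2 - p.2.2) : ℝ) : ℂ) *
              (ψ j p.1 * starRingEnd ℂ (ψ k p.2))) := by
          refine Finset.sum_congr rfl fun j _ => Finset.sum_congr rfl fun k _ => ?_
          rw [integral_const_mul, Jcov, ← integral_complex_ofReal]
          congr 2
          ext p
          simp only [hψ, hg, hh, Complex.conj_ofReal]
          push_cast
          ring
      _ = ∫ p : (ℝ × Ed d) × (ℝ × Ed d), ∑ j : Fin n, ∑ k : Fin n,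
            a j * starRingEnd ℂ (a k) * (((g (p.1.1 - p.2.1) * h (p.1.2 - p.2.2) : ℝ) : ℂ) *
              (ψ j p.1 * starRingEnd ℂ (ψ k p.2))) := by
          rw [integral_finsetSum _ fun j _ => integrable_finsetSum _ fun k _ => hint j k]
          exact Finset.sum_congr rfl fun j _ => (integral_finsetSum _ fun k _ => hint j k).symm
      _ = _ := by
          congr 1
          ext p
          simp only [hΦ, map_sum, map_mul]
          rw [Finset.sum_mul_sum, Finset.mul_sum]
          refine Finset.sum_congr rfl fun j _ => ?_
          rw [Finset.mul_sum]
          refine Finset.sum_congr rfl fun k _ => ?_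
          ring
  rw [hsum]
  exact ⟨by simpa using hr, by simp⟩
end
end

section
/- Let μ be a tempered Borel measure on ℝ^d. Then the set {ℱl : l ∈ C_c^∞(ℝ^d; ℝ)} is dense in the space of Hermitian-symmetric square-integrable functions: for every measurable φ : ℝ^d → ℂ with ∫ |φ(ξ)|² μ(dξ) < ∞ and φ(ξ) = conj(φ(−ξ)) for all ξ ∈ ℝ^d, and for every ε > 0, there exists l ∈ C_c^∞(ℝ^d; ℝ) such that ∫_{ℝ^d} |φ(ξ) − ℱl(ξ)|² μ(dξ) < ε². -/
/-!
Write `ℱ` for `FTd`, which on Schwartz space is Mathlib's Fourier transform followed by a dilation,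
hence a continuous bijection (`fourierSchwartz`).

For a tempered measure `ν`, Schwartz space maps continuously and with dense range to `L²(ν)`, and
compactly supported functions are dense in Schwartz space for its own topology
(`dense_hasCompactSupport`). So the transforms of complex `C_c^∞` functions are dense in `L²(ν)`
(`exists_schwartz_near`).

To reach real functions, take `ν` to be the sum of `μ` and its reflection, which is again tempered
and gives finite square integral to a Hermitian `φ`. If `ℱh` is close to `φ` in `L²(ν)`, then `Re h`
works, because `ℱ(Re h)(ξ) = (ℱh(ξ) + conj ℱh(-ξ)) / 2` (`FTd_re`) and `φ` satisfies the same
identity: the error at `ξ` is controlled by the errors of `ℱh` at `ξ` and `-ξ`, that is, after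
integration against `μ`, by the error in `L²(ν)`.
-/

open MeasureTheory Real
open scoped ENNReal RealInnerProductSpace

noncomputable section

/-! ### Compactly supported functions are dense in Schwartz space -/

open SchwartzMap Filter Topology
open scoped FourierTransform ContDiff

theorem exists_bound_iteratedFDeriv_one_sub {E : Type*} [NormedAddCommGroup E] [NormedSpace ℝ E]
    {χ : E → ℝ} (hχ : ContDiff ℝ ∞ χ) (hc : HasCompactSupport χ) (i : ℕ) :
    ∃ C, 0 ≤ C ∧ ∀ x, ‖iteratedFDeriv ℝ i (fun y => 1 - χ y) x‖ ≤ C := by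
  refine ⟨1 + SchwartzMap.seminorm ℝ 0 i (hc.toSchwartzMap hχ), by positivity, fun x => ?_⟩
  have h1 : iteratedFDeriv ℝ i (fun y => 1 - χ y) x =
      iteratedFDeriv ℝ i (fun _ : E => (1 : ℝ)) x - iteratedFDeriv ℝ i χ x :=
    iteratedFDeriv_sub_apply (f := fun _ : E => (1 : ℝ)) (g := χ)
      contDiff_const.contDiffAt (hχ.of_le (by exact_mod_cast le_top)).contDiffAt
  rw [h1]
  refine (norm_sub_le _ _).trans (add_le_add ?_ ?_)
  · rcases i with _ | i
    · simp
    · simp [iteratedFDeriv_succ_const]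
  · exact norm_iteratedFDeriv_le_seminorm ℝ (hc.toSchwartzMap hχ) i x

/-- Compactly supported functions are dense in Schwartz space: the dilated cutoffs
`x ↦ χ (x / (N + 1)) • f x` converge to `f` in every Schwartz seminorm. -/
theorem dense_hasCompactSupport {E F : Type*} [NormedAddCommGroup E] [InnerProductSpace ℝ E]
    [FiniteDimensional ℝ E] [NormedAddCommGroup F] [NormedSpace ℝ F] :
    Dense {f : 𝓢(E, F) | HasCompactSupport f} := by
  intro f
  let χ : ContDiffBump (0 : E) := ⟨1, 2, one_pos, one_lt_two⟩
  have hχ : ContDiff ℝ ∞ χ := χ.contDiff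
  have hχc : HasCompactSupport χ := χ.hasCompactSupport
  let a : ℕ → ℝ := fun N => ((N : ℝ) + 1)⁻¹
  have ha0 : ∀ N, 0 < a N := fun N => by positivity
  have ha1 : ∀ N, a N ≤ 1 := fun N => inv_le_one_of_one_le₀ (by linarith [N.cast_nonneg (α := ℝ)])
  have ha : Tendsto a atTop (𝓝 0) := by
    simpa [a, one_div] using tendsto_one_div_add_atTop_nhds_zero_nat (𝕜 := ℝ)
  have hs : ∀ N, ContDiff ℝ ∞ (fun x => χ (a N • x)) := fun N => hχ.comp (contDiff_id.const_smul _)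
  have hsc : ∀ N, HasCompactSupport (fun x => χ (a N • x)) := fun N =>
    hχc.comp_smul (ha0 N).ne'
  let g : ℕ → 𝓢(E, F) := fun N => smulLeftCLM F (fun x => χ (a N • x)) f
  have hg : ∀ N x, g N x = χ (a N • x) • f x := fun N x =>
    smulLeftCLM_apply_apply ((hsc N).hasTemperateGrowth (hs N)) f x
  refine mem_closure_of_tendsto (f := g) (b := atTop) ?_ (Eventually.of_forall fun N => ?_)
  · rw [(schwartz_withSeminorms ℝ E F).tendsto_nhds]
    rintro ⟨k, m⟩ ε hε
    choose C hC0 hC using exists_bound_iteratedFDeriv_one_sub hχ hχc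
    let M : ℝ := ∑ i ∈ Finset.range (m + 1),
      (m.choose i : ℝ) * C i * SchwartzMap.seminorm ℝ (k + 1) (m - i) f
    have hM : 0 ≤ M := Finset.sum_nonneg fun i _ => by have := hC0 i; positivity
    -- The difference vanishes for `‖x‖ < N + 1`, and elsewhere one power of `‖x‖` is traded for
    -- the factor `a N`; dilating by `a N ≤ 1` does not increase the derivatives of the cutoff.
    have key : ∀ N, SchwartzMap.seminorm ℝ k m (g N - f) ≤ a N * M := by
      intro N
      refine seminorm_le_bound ℝ k m _ (mul_nonneg (ha0 N).le hM) fun x => ?_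
      have hu : ContDiff ℝ ∞ (fun y => 1 - χ y) := contDiff_const.sub hχ
      have hcoe : ((g N - f : 𝓢(E, F)) : E → F) =
          fun y => -((1 - χ (a N • y)) • f y) := by
        ext y
        change g N y - f y = _
        rw [hg, sub_smul, one_smul, neg_sub]
      by_cases hx : ‖a N • x‖ < 1
      · have h0 : ((g N - f : 𝓢(E, F)) : E → F) =ᶠ[𝓝 x] fun _ => 0 := by
          have hev : ∀ᶠ y in 𝓝 x, ‖a N • y‖ < 1 :=
            (continuous_const_smul (a N)).norm.continuousAt.eventually_lt continuousAt_const hx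
          filter_upwards [hev] with y hy
          rw [hcoe]
          have : χ (a N • y) = 1 := χ.one_of_mem_closedBall (by simpa using hy.le)
          simp [this]
        rw [(h0.iteratedFDeriv ℝ m).eq_of_nhds]
        have : iteratedFDeriv ℝ m (fun _ : E => (0 : F)) x = 0 := by
          simp
        rw [this, norm_zero, mul_zero]
        exact mul_nonneg (ha0 N).le hM
      · have hx' : 1 ≤ a N * ‖x‖ := by
          rw [not_lt, norm_smul, Real.norm_of_nonneg (ha0 N).le] at hx; exact hx
        have hneg : ‖iteratedFDeriv ℝ m (g N - f : 𝓢(E, F)) x‖ =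
            ‖iteratedFDeriv ℝ m (fun y => (1 - χ (a N • y)) • f y) x‖ := by
          rw [hcoe]
          change ‖iteratedFDeriv ℝ m (-(fun y => (1 - χ (a N • y)) • f y)) x‖ = _
          rw [iteratedFDeriv_neg_apply, norm_neg]
        rw [hneg]
        have hle := norm_iteratedFDeriv_smul_le (𝕜 := ℝ) (N := ∞)
          (hu.comp (contDiff_id.const_smul (a N))) (f.smooth ⊤) x (n := m) (by exact_mod_cast le_top)
        refine (mul_le_mul_of_nonneg_left hle (by positivity)).trans ?_
        rw [Finset.mul_sum, Finset.mul_sum]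
        refine Finset.sum_le_sum fun i _ => ?_
        have h1 : ‖iteratedFDeriv ℝ i ((fun y => 1 - χ y) ∘ fun y => a N • id y) x‖ ≤ C i := by
          have := congrFun (iteratedFDeriv_comp_const_smul (𝕜 := ℝ) (i := i) (a N)
            (hu.of_le (by exact_mod_cast le_top))) x
          change ‖iteratedFDeriv ℝ i (fun y => (fun y => 1 - χ y) (a N • y)) x‖ ≤ C i
          rw [this, norm_smul, norm_pow, Real.norm_of_nonneg (ha0 N).le]
          calc _ ≤ 1 * C i := mul_le_mul (pow_le_one₀ (ha0 N).le (ha1 N)) (hC i _)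
                (norm_nonneg _) zero_le_one
            _ = C i := one_mul _
        have h2 : ‖x‖ ^ k * ‖iteratedFDeriv ℝ (m - i) f x‖ ≤
            a N * SchwartzMap.seminorm ℝ (k + 1) (m - i) f := by
          have := le_seminorm ℝ (k + 1) (m - i) f x
          calc _ ≤ (a N * ‖x‖) * (‖x‖ ^ k * ‖iteratedFDeriv ℝ (m - i) f x‖) :=
                le_mul_of_one_le_left (by positivity) hx'
            _ = a N * (‖x‖ ^ (k + 1) * ‖iteratedFDeriv ℝ (m - i) f x‖) := by ring
            _ ≤ _ := mul_le_mul_of_nonneg_left this (ha0 N).le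
        calc _ = (m.choose i : ℝ) *
              (‖iteratedFDeriv ℝ i ((fun y => 1 - χ y) ∘ fun y => a N • id y) x‖ *
              (‖x‖ ^ k * ‖iteratedFDeriv ℝ (m - i) f x‖)) := by ring
          _ ≤ (m.choose i : ℝ) * (C i * (a N * SchwartzMap.seminorm ℝ (k + 1) (m - i) f)) := by
              gcongr
              exact hC0 i
          _ = _ := by ring
    have hlim : Tendsto (fun N => a N * M) atTop (𝓝 0) := by simpa using ha.mul_const M
    filter_upwards [hlim.eventually (gt_mem_nhds hε)] with N hN
    exact (key N).trans_lt hN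
  · have : (g N : E → F) = fun x => χ (a N • x) • f x := funext (hg N)
    change HasCompactSupport (g N : E → F)
    rw [this]
    exact (hsc N).smul_right

/-! ### Tempered measures and their symmetrization -/

/-- The measure `μ` plus its reflection under `ξ ↦ -ξ` (not divided by `2`). -/
def symmMeasure {d : ℕ} (μ : Measure (Ed d)) : Measure (Ed d) := μ + μ.map (fun ξ => -ξ)

theorem lintegral_symmMeasure {d : ℕ} (μ : Measure (Ed d)) {f : Ed d → ℝ≥0∞} (hf : Measurable f) :
    ∫⁻ ξ, f ξ ∂(symmMeasure μ) = ∫⁻ ξ, f ξ ∂μ + ∫⁻ ξ, f (-ξ) ∂μ := by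
  rw [symmMeasure, lintegral_add_measure, lintegral_map hf measurable_neg]

theorem IsTempered.symmMeasure {d : ℕ} {μ : Measure (Ed d)} (h : IsTempered d μ) :
    IsTempered d (symmMeasure μ) := by
  obtain ⟨k, hk⟩ := h
  refine ⟨k, ?_⟩
  rw [lintegral_symmMeasure μ (by fun_prop)]
  simpa using hk

theorem IsTempered.hasTemperateGrowth {d : ℕ} {μ : Measure (Ed d)} (h : IsTempered d μ) :
    μ.HasTemperateGrowth := by
  obtain ⟨k, hk⟩ := h
  refine ⟨2 * k, ⟨Measurable.aestronglyMeasurable (by fun_prop), ?_⟩⟩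
  refine lt_of_le_of_lt (lintegral_mono fun ξ => ?_) hk
  rw [Real.enorm_of_nonneg (by positivity)]
  refine ENNReal.ofReal_le_ofReal ?_
  have h1 : ((1 + ‖ξ‖) ^ 2) ^ (-(k : ℝ)) = (1 + ‖ξ‖) ^ (-((2 * k : ℕ) : ℝ)) := by
    rw [← Real.rpow_natCast, ← Real.rpow_mul (by positivity)]
    push_cast
    ring_nf
  change (1 + ‖ξ‖) ^ (-((2 * k : ℕ) : ℝ)) ≤ _
  rw [← h1]
  exact Real.rpow_le_rpow_of_nonpos (by positivity) (by nlinarith [norm_nonneg ξ]) (by simp)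

theorem isFiniteMeasureOnCompacts_of_hasTemperateGrowth {E : Type*} [NormedAddCommGroup E]
    [MeasurableSpace E] (μ : Measure E) [h : μ.HasTemperateGrowth] :
    IsFiniteMeasureOnCompacts μ := by
  obtain ⟨n, hn⟩ := h.exists_integrable
  refine ⟨fun K hK => ?_⟩
  obtain ⟨R, hR0, hR⟩ := hK.isBounded.exists_pos_norm_le
  refine lt_of_le_of_lt (measure_mono fun x hx => ?_)
    (hn.measure_norm_ge_lt_top (ε := (1 + R) ^ (-(n : ℝ))) (by positivity))
  change _ ≤ ‖_‖
  rw [Real.norm_of_nonneg (by positivity)]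
  exact Real.rpow_le_rpow_of_nonpos (by positivity) (by linarith [hR x hx]) (by simp)

/-! ### The Fourier transform on Schwartz space -/

/-- The dilation `ξ ↦ ξ / 2π`, relating the transform `FTd` (kernel `e^{-i ξ·x}`) to Mathlib's
`𝓕` (kernel `e^{-2πi ξ·x}`). -/
def scaleEquiv (d : ℕ) : Ed d ≃L[ℝ] Ed d :=
  ContinuousLinearEquiv.smulLeft (Units.mk0 ((2 * π)⁻¹ : ℝ) (by positivity))

/-- The transform `FTd` as a continuous linear map of Schwartz space, see
`fourierSchwartz_apply`. -/
def fourierSchwartz (d : ℕ) : 𝓢(Ed d, ℂ) →L[ℝ] 𝓢(Ed d, ℂ) :=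
  (compCLMOfContinuousLinearEquiv ℝ (scaleEquiv d)).comp (fourierTransformCLM ℝ)

theorem fourierSchwartz_apply {d : ℕ} (h : 𝓢(Ed d, ℂ)) (ξ : Ed d) :
    fourierSchwartz d h ξ = FTd d h ξ := by
  change 𝓕 (h : Ed d → ℂ) ((2 * π)⁻¹ • ξ) = _
  rw [Real.fourier_eq', FTd]
  refine integral_congr_ae (.of_forall fun x => ?_)
  simp only [smul_eq_mul, inner_smul_right, real_inner_comm ξ x]
  congr 2
  have : (π : ℂ) ≠ 0 := by exact_mod_cast Real.pi_ne_zero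
  push_cast
  field_simp

theorem fourierSchwartz_surjective (d : ℕ) : Function.Surjective (fourierSchwartz d) := by
  intro g
  refine ⟨𝓕⁻ (compCLMOfContinuousLinearEquiv ℝ (scaleEquiv d).symm g), ?_⟩
  change compCLMOfContinuousLinearEquiv ℝ (scaleEquiv d) 
    (𝓕 (𝓕⁻ (compCLMOfContinuousLinearEquiv ℝ (scaleEquiv d).symm g))) = g
  rw [FourierTransform.fourier_fourierInv_eq]
  ext x
  simp

/-! ### Density -/

/-- Density of the transforms of complex `C_c^∞` functions in the complex space `L²(ν)`, without
any symmetry: a continuous map with dense range sends a dense set to a dense set. -/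
theorem exists_schwartz_near {d : ℕ} (ν : Measure (Ed d)) (hν : IsTempered d ν) {φ : Ed d → ℂ}
    (hφ : MemLp φ 2 ν) {ε : ℝ} (hε : 0 < ε) :
    ∃ h : 𝓢(Ed d, ℂ), HasCompactSupport h ∧
      ∫⁻ ξ, ‖φ ξ - FTd d h ξ‖ₑ ^ 2 ∂ν < ENNReal.ofReal (ε ^ 2) := by
  have := hν.hasTemperateGrowth
  have := isFiniteMeasureOnCompacts_of_hasTemperateGrowth ν
  have hd : Dense ((fun h => (fourierSchwartz d h).toLp 2 ν) ''
      {h : 𝓢(Ed d, ℂ) | HasCompactSupport h}) := by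
    refine DenseRange.dense_image ?_
      ((continuous_toLp (E := Ed d) (F := ℂ)).comp (fourierSchwartz d).continuous)
      dense_hasCompactSupport
    exact (denseRange_toLpCLM (by simp)).comp (fourierSchwartz_surjective d).denseRange
      (toLpCLM ℝ ℂ 2 ν).continuous
  obtain ⟨_, ⟨h, hh, rfl⟩, hlt⟩ := hd.exists_dist_lt (hφ.toLp φ) hε
  refine ⟨h, hh, ?_⟩
  have h1 : eLpNorm (φ - (fourierSchwartz d h : Ed d → ℂ)) 2 ν < ENNReal.ofReal ε := by
    rw [← Lp.edist_toLp_toLp φ _ hφ ((fourierSchwartz d h).memLp 2 ν), edist_dist]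
    exact (ENNReal.ofReal_lt_ofReal_iff hε).2 hlt
  have h2 := eLpNorm_nnreal_pow_eq_lintegral (f := φ - (fourierSchwartz d h : Ed d → ℂ)) (μ := ν)
    (p := 2) two_ne_zero
  simp only [NNReal.coe_ofNat, ENNReal.rpow_ofNat, ENNReal.coe_ofNat, Pi.sub_apply,
    fourierSchwartz_apply] at h2
  rw [← h2, ENNReal.ofReal_pow hε.le]
  exact ENNReal.pow_lt_pow_left two_ne_zero h1

/-- Taking real parts on the space side is Hermitian symmetrization on the frequency side. -/
theorem FTd_re {d : ℕ} (h : 𝓢(Ed d, ℂ)) (ξ : Ed d) :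
    FTd d (fun x => ((h x).re : ℂ)) ξ =
      (FTd d h ξ + (starRingEnd ℂ) (FTd d h (-ξ))) / 2 := by
  have hi : Integrable (fun x : Ed d => Complex.exp (-(Complex.I * ((⟪ξ, x⟫ : ℝ) : ℂ))) * h x) := by
    refine h.integrable.bdd_mul (c := 1) (by fun_prop) (.of_forall fun x => ?_)
    rw [← mul_neg, ← Complex.ofReal_neg, Complex.norm_exp_I_mul_ofReal]
  have hi' : Integrable (fun x : Ed d =>
      Complex.exp (-(Complex.I * ((⟪ξ, x⟫ : ℝ) : ℂ))) * (starRingEnd ℂ) (h x)) := by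
    refine Integrable.bdd_mul (c := 1) ?_ (by fun_prop) (.of_forall fun x => ?_)
    · exact Complex.conjLIE.toContinuousLinearEquiv.toContinuousLinearMap.integrable_comp
        h.integrable
    · rw [← mul_neg, ← Complex.ofReal_neg, Complex.norm_exp_I_mul_ofReal]
  simp only [FTd]
  rw [← integral_conj, eq_div_iff two_ne_zero, ← integral_mul_const]
  have : ∀ x : Ed d, (starRingEnd ℂ) (Complex.exp (-(Complex.I * ((⟪-ξ, x⟫ : ℝ) : ℂ))) * h x) =
      Complex.exp (-(Complex.I * ((⟪ξ, x⟫ : ℝ) : ℂ))) * (starRingEnd ℂ) (h x) := by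
    intro x
    rw [map_mul, ← Complex.exp_conj]
    simp
  simp only [this]
  rw [← integral_add hi hi']
  refine integral_congr_ae (.of_forall fun x => ?_)
  simp only [← mul_add, Complex.add_conj]
  push_cast
  ring

theorem enorm_half_add_sq_le (a b : ℂ) : ‖(a + b) / 2‖ₑ ^ 2 ≤ ‖a‖ₑ ^ 2 + ‖b‖ₑ ^ 2 := by
  simp only [← ofReal_norm]
  rw [← ENNReal.ofReal_pow (norm_nonneg _), ← ENNReal.ofReal_pow (norm_nonneg _),
    ← ENNReal.ofReal_pow (norm_nonneg _), ← ENNReal.ofReal_add (by positivity) (by positivity)]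
  refine ENNReal.ofReal_le_ofReal ?_
  rw [norm_div, Complex.norm_ofNat]
  nlinarith [norm_add_le a b, norm_nonneg (a + b), sq_nonneg (‖a‖ - ‖b‖), norm_nonneg a,
    norm_nonneg b, mul_self_le_mul_self (norm_nonneg (a + b)) (norm_add_le a b)]

/-- The Fourier transforms of real `C_c^∞` functions are dense in the
space of Hermitian-symmetric square-integrable functions w.r.t. a tempered measure `μ`. -/
theorem stmt2 (d : ℕ) (μ : Measure (Ed d)) (hμt : IsTempered d μ)
    (φ : Ed d → ℂ) (hφm : Measurable φ)
    (hφ2 : ∫⁻ ξ, (‖φ ξ‖₊ : ℝ≥0∞) ^ 2 ∂μ < ⊤)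
    (hherm : ∀ ξ : Ed d, φ ξ = (starRingEnd ℂ) (φ (-ξ)))
    (ε : ℝ) (hε : 0 < ε) :
    ∃ l : Ed d → ℝ, ContDiff ℝ (⊤ : ℕ∞) l ∧ HasCompactSupport l ∧
      ∫⁻ ξ, (‖φ ξ - FTd d (fun x => (l x : ℂ)) ξ‖₊ : ℝ≥0∞) ^ 2 ∂μ <
        ENNReal.ofReal (ε ^ 2) := by
  simp only [← enorm_eq_nnnorm] at hφ2 ⊢
  -- Since `|φ|` is even, its square integral against the symmetrized measure is twice the one
  -- against `μ`.
  have hφν : MemLp φ 2 (symmMeasure μ) := by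
    refine ⟨hφm.aestronglyMeasurable, ?_⟩
    have h2 := eLpNorm_nnreal_pow_eq_lintegral (f := φ) (μ := symmMeasure μ) (p := 2) two_ne_zero
    simp only [NNReal.coe_ofNat, ENNReal.rpow_ofNat, ENNReal.coe_ofNat] at h2
    rw [lintegral_symmMeasure μ (by fun_prop)] at h2
    have h3 : ∀ ξ, ‖φ (-ξ)‖ₑ = ‖φ ξ‖ₑ := fun ξ => by
      rw [hherm ξ, ← ofReal_norm, ← ofReal_norm, RCLike.norm_conj]
    simp only [h3] at h2
    have h4 : eLpNorm φ 2 (symmMeasure μ) ^ 2 < ⊤ := h2 ▸ ENNReal.add_lt_top.2 ⟨hφ2, hφ2⟩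
    exact (ENNReal.pow_lt_top_iff.1 h4).resolve_right two_ne_zero
  obtain ⟨h, hc, hlt⟩ := exists_schwartz_near (symmMeasure μ) hμt.symmMeasure hφν hε
  refine ⟨fun x => (h x).re, Complex.reCLM.contDiff.comp (h.smooth ⊤),
    hc.comp_left Complex.zero_re, lt_of_le_of_lt ?_ hlt⟩
  have hFm : Measurable (FTd d h) := by
    have : FTd d h = fourierSchwartz d h := funext fun ξ => (fourierSchwartz_apply h ξ).symm
    rw [this]
    exact (fourierSchwartz d h).continuous.measurable
  have hm : Measurable fun ξ => ‖φ ξ - FTd d h ξ‖ₑ ^ 2 := by fun_prop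
  rw [lintegral_symmMeasure μ hm, ← lintegral_add_left hm]
  refine lintegral_mono fun ξ => ?_
  have h1 : φ ξ - FTd d (fun x => ((h x).re : ℂ)) ξ =
      ((φ ξ - FTd d h ξ) + (starRingEnd ℂ) (φ (-ξ) - FTd d h (-ξ))) / 2 := by
    rw [FTd_re, map_sub, ← hherm]
    ring
  have h2 : ‖(starRingEnd ℂ) (φ (-ξ) - FTd d h (-ξ))‖ₑ = ‖φ (-ξ) - FTd d h (-ξ)‖ₑ := by
    rw [← ofReal_norm, ← ofReal_norm, RCLike.norm_conj]
  rw [h1, ← h2]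
  exact enorm_half_add_sq_le _ _
end
end

section
/- Let γ : ℝ → [0,∞] be a measurable, symmetric (γ(−t) = γ(t)), locally integrable function, and let μ be a Borel measure on ℝ^d satisfying Dalang's condition ∫_{ℝ^d} (1+|ξ|²)^{-1} μ(dξ) < ∞. Then for every t > 0 the integral I_t := ∫_{ℝ^d} ∫_0^t ∫_0^t γ(r−s) · (sin((t−r)|ξ|)/|ξ|) · (sin((t−s)|ξ|)/|ξ|) dr ds μ(dξ) is absolutely convergent, i.e. ∫_{ℝ^d} ∫_0^t ∫_0^t γ(r−s) · |sin((t−r)|ξ|)| · |sin((t−s)|ξ|)| / |ξ|² dr ds μ(dξ) < ∞. (Here sin(a|ξ|)/|ξ| is interpreted as a when ξ = 0.) -/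
/-!
For `|a| ≤ t` one has both `|sinc a ρ| ≤ t` and `|sinc a ρ| ≤ 1 / ρ`, hence
`(sinc a ρ)² ≤ (1 + t²) / (1 + ρ²)`. So the spatial factor of the integrand is at most
`(1 + t²) / (1 + ‖ξ‖²)`, uniformly in `r, s ∈ [0, t]`, and this is `μ`-integrable by Dalang's
condition. What remains is the time factor `∫_0^t ∫_0^t γ(r - s) ds dr ≤ t ∫_{[-t, t]} γ`
(`lintegral_lintegral_kernel_le`), which is finite by local integrability. As the first bound is
uniform in time, no exchange of integrals is needed, and `μ` need not be assumed σ-finite.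
-/


open MeasureTheory Real
open scoped ENNReal

noncomputable section

/-- `sinc a r = sin(a r)/r`, interpreted as `a` when `r = 0`. -/
def sinc (a r : ℝ) : ℝ := if r = 0 then a else Real.sin (a * r) / r

theorem sinc_sq_mul_le {a t : ℝ} (ρ : ℝ) (ha : |a| ≤ t) :
    sinc a ρ ^ 2 * (1 + ρ ^ 2) ≤ 1 + t ^ 2 := by
  have hat : a ^ 2 ≤ t ^ 2 := sq_le_sq' (by linarith [neg_abs_le a]) ((le_abs_self a).trans ha)
  unfold _root_.sinc
  split_ifs with h
  · subst h
    linarith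
  · have h1 : (Real.sin (a * ρ) / ρ) ^ 2 * ρ ^ 2 = Real.sin (a * ρ) ^ 2 := by
      field_simp
    have h2 : (Real.sin (a * ρ) / ρ) ^ 2 ≤ a ^ 2 := by
      rw [div_pow, div_le_iff₀ (by positivity), ← mul_pow]
      exact sq_le_sq.mpr Real.abs_sin_le_abs
    have h3 := Real.sin_sq_le_one (a * ρ)
    linarith

theorem abs_sinc_mul_abs_sinc_le {a b t : ℝ} (ρ : ℝ) (ha : |a| ≤ t) (hb : |b| ≤ t) :
    |sinc a ρ| * |sinc b ρ| ≤ (1 + t ^ 2) * (1 / (1 + ρ ^ 2)) := by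
  rw [mul_one_div, le_div_iff₀ (by positivity)]
  have h := mul_le_mul_of_nonneg_right (two_mul_le_add_sq |sinc a ρ| |sinc b ρ|)
    (show (0 : ℝ) ≤ 1 + ρ ^ 2 by positivity)
  rw [sq_abs, sq_abs] at h
  linarith [sinc_sq_mul_le ρ ha, sinc_sq_mul_le ρ hb]

/-- The time factor: for `r, s ∈ [0, t]` the difference `r - s` stays in `[-t, t]`. -/
theorem lintegral_lintegral_kernel_le (γ : ℝ → ℝ≥0∞) (t : ℝ) :
    ∫⁻ r in Set.Icc (0 : ℝ) t, ∫⁻ s in Set.Icc (0 : ℝ) t, γ (r - s)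
      ≤ (∫⁻ x in Set.Icc (-t) t, γ x) * volume (Set.Icc (0 : ℝ) t) := by
  rw [← setLIntegral_const]
  refine setLIntegral_mono' measurableSet_Icc fun r hr => ?_
  rw [← lintegral_indicator measurableSet_Icc, ← lintegral_indicator measurableSet_Icc,
    ← lintegral_sub_left_eq_self ((Set.Icc (-t) t).indicator γ) r]
  refine lintegral_mono fun s => ?_
  by_cases hs : s ∈ Set.Icc (0 : ℝ) t
  · have hrs : r - s ∈ Set.Icc (-t) t := ⟨by linarith [hr.1, hs.2], by linarith [hr.2, hs.1]⟩
    simp [hs, hrs]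
  · simp [hs]

/-- Under Dalang's condition, for every `t > 0` the integral
`I_t = ∫_{ℝ^d} ∫_0^t ∫_0^t γ(r−s) sin((t−r)|ξ|) sin((t−s)|ξ|)/|ξ|² dr ds μ(dξ)`
is absolutely convergent. -/
theorem stmt4 (d : ℕ) (γ : ℝ → ℝ≥0∞) (hγm : Measurable γ)
    (hγsym : ∀ s : ℝ, γ (-s) = γ s) (hγloc : LocIntENN1 γ)
    (μ : Measure (Ed d))
    (hDalang : ∫⁻ ξ, ENNReal.ofReal (1 / (1 + ‖ξ‖ ^ 2)) ∂μ < ⊤)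
    (t : ℝ) (ht : 0 < t) :
    ∫⁻ ξ : Ed d, (∫⁻ r in Set.Icc (0 : ℝ) t, ∫⁻ s in Set.Icc (0 : ℝ) t,
        γ (r - s) * ENNReal.ofReal (|sinc (t - r) ‖ξ‖| * |sinc (t - s) ‖ξ‖|)) ∂μ < ⊤ := by
  have hK : ∫⁻ r in Set.Icc (0 : ℝ) t, ∫⁻ s in Set.Icc (0 : ℝ) t, γ (r - s) < ⊤ :=
    (lintegral_lintegral_kernel_le γ t).trans_lt
      (ENNReal.mul_lt_top (hγloc _ isCompact_Icc) measure_Icc_lt_top)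
  set K := ∫⁻ r in Set.Icc (0 : ℝ) t, ∫⁻ s in Set.Icc (0 : ℝ) t, γ (r - s)
  have habs : ∀ r ∈ Set.Icc (0 : ℝ) t, |t - r| ≤ t := fun r hr =>
    abs_le.mpr ⟨by linarith [hr.2], by linarith [hr.1]⟩
  have hbound : ∀ ξ : Ed d, (∫⁻ r in Set.Icc (0 : ℝ) t, ∫⁻ s in Set.Icc (0 : ℝ) t,
        γ (r - s) * ENNReal.ofReal (|sinc (t - r) ‖ξ‖| * |sinc (t - s) ‖ξ‖|))
      ≤ (K * ENNReal.ofReal (1 + t ^ 2)) * ENNReal.ofReal (1 / (1 + ‖ξ‖ ^ 2)) := by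
    intro ξ
    rw [mul_assoc, ← ENNReal.ofReal_mul (by positivity),
      ← lintegral_mul_const' _ _ ENNReal.ofReal_ne_top]
    refine setLIntegral_mono' measurableSet_Icc fun r hr => ?_
    rw [← lintegral_mul_const' _ _ ENNReal.ofReal_ne_top]
    refine setLIntegral_mono' measurableSet_Icc fun s hs => ?_
    refine mul_le_mul' le_rfl (ENNReal.ofReal_le_ofReal ?_)
    exact abs_sinc_mul_abs_sinc_le ‖ξ‖ (habs r hr) (habs s hs)
  have hC : K * ENNReal.ofReal (1 + t ^ 2) < ⊤ := ENNReal.mul_lt_top hK ENNReal.ofReal_lt_top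
  refine (lintegral_mono hbound).trans_lt ?_
  rw [lintegral_const_mul' _ _ hC.ne]
  exact ENNReal.mul_lt_top hC hDalang
end
end

section
/- Let μ be a tempered Borel measure on ℝ^d whose Fourier transform in the Parseval sense is a locally integrable function f : ℝ^d → [0,∞] with f(x) < ∞ for every x ≠ 0. Then for any t > 0, sup_{η ∈ ℝ^d} ∫_{ℝ^d} (sin(t|ξ+η|)/|ξ+η|)² μ(dξ) ≤ 4t² ∫_{ℝ^d} (1/(1+t²|ξ|²)) μ(dξ), where sin(t r)/r is interpreted as t when r = 0. -/
/-!
The multiplier satisfies `(sin(tr)/r)² ≤ min(t², 1/r²) ≤ 4t²/(1 + t²r²)`, so it suffices to show that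
`∫ 1/(1 + t²|ξ+η|²) μ(dξ)` is largest at `η = 0`. This holds because `ξ ↦ 1/(1 + t²|ξ|²)` is the
Fourier transform of a nonnegative function (a Bessel kernel) and `f ≥ 0`: translating by `η`
multiplies that function by the unimodular factor `e^{-iη·x}`, which can only decrease the absolute
value of its integral against `f`.

The Bessel kernel is not a Schwartz function, so the argument is run on Gaussians, which are, and
integrated afterwards through `1/(1 + t²r²) = ∫₀^∞ e^{-s} e^{-s t² r²} ds`. Thus
`integral_gauss_translate_le` applies the Parseval identity to modulated Gaussians, whose Fourier
transforms are translated Gaussians, and `lintegral_resolvent_eq` is Tonelli's theorem for the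
superposition; temperedness of `μ` gives integrability of the Gaussians and σ-finiteness.
-/

open MeasureTheory Real
open scoped ENNReal RealInnerProductSpace

noncomputable section

/-! ### Gaussians as Schwartz functions -/

/-- If `q` has polynomially bounded derivatives, then every derivative of `exp ∘ q`
is bounded by `exp (q x)` times a polynomially bounded factor, because `exp` is its own derivative. -/
lemma norm_iteratedFDeriv_exp_comp_le {E : Type*} [NormedAddCommGroup E] [NormedSpace ℝ E]
    {q : E → ℝ} (hq : q.HasTemperateGrowth) (n : ℕ) :
    ∃ (k : ℕ) (C : ℝ), 0 ≤ C ∧ ∀ x,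
      ‖iteratedFDeriv ℝ n (fun x => Real.exp (q x)) x‖ ≤ C * (1 + ‖x‖) ^ k * Real.exp (q x) := by
  obtain ⟨k, C, hC, h⟩ := hq.norm_iteratedFDeriv_le_uniform n
  refine ⟨k * n, n.factorial * (1 + C) ^ n, by positivity, fun x => ?_⟩
  have key := norm_iteratedFDeriv_comp_le (𝕜 := ℝ) (g := Real.exp) (f := q) (n := n) (N := n)
    (C := Real.exp (q x)) (D := (1 + C) * (1 + ‖x‖) ^ k)
    Real.contDiff_exp (hq.1.of_le (mod_cast le_top)) le_rfl x ?_ ?_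
  · refine (show _ ≤ _ from key).trans (le_of_eq ?_)
    rw [mul_pow, ← pow_mul]
    ring
  · intro i _
    rw [norm_iteratedFDeriv_eq_norm_iteratedDeriv]
    simp [iteratedDeriv_eq_iterate, Real.iter_deriv_exp]
  · intro i hi hin
    have h1 : (1 : ℝ) ≤ (1 + ‖x‖) ^ k := one_le_pow₀ (by linarith [norm_nonneg x])
    have h2 : (1 : ℝ) ≤ (1 + C) * (1 + ‖x‖) ^ k := by nlinarith
    calc _ ≤ C * (1 + ‖x‖) ^ k := h i hin x
      _ ≤ (1 + C) * (1 + ‖x‖) ^ k := by gcongr; linarith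
      _ ≤ _ := le_self_pow₀ h2 (by omega)

/-- A Gaussian beats every power of `1 + ‖x‖²`. -/
lemma one_add_sq_pow_mul_exp_le {b : ℝ} (hb : 0 < b) (k : ℕ) :
    ∃ C : ℝ, 0 ≤ C ∧ ∀ r : ℝ, (1 + r ^ 2) ^ k * Real.exp (-b * r ^ 2) ≤ C := by
  refine ⟨k.factorial / b ^ k * Real.exp b, by positivity, fun r => ?_⟩
  have h := Real.pow_div_factorial_le_exp (b * (1 + r ^ 2)) (by positivity) k
  rw [div_le_iff₀ (by positivity), mul_pow] at h
  have h' : (1 + r ^ 2) ^ k ≤ Real.exp (b * (1 + r ^ 2)) * k.factorial / b ^ k := by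
    rw [le_div_iff₀ (by positivity)]
    linarith
  calc _ ≤ Real.exp (b * (1 + r ^ 2)) * k.factorial / b ^ k * Real.exp (-b * r ^ 2) := by gcongr
    _ = k.factorial / b ^ k * (Real.exp (b * (1 + r ^ 2)) * Real.exp (-b * r ^ 2)) := by ring
    _ = _ := by rw [← Real.exp_add]; ring_nf

/-- The Gaussian `x ↦ exp (-b ‖x‖²)`, `b > 0`, as a Schwartz function. -/
def gaussS (d : ℕ) (b : ℝ) (hb : 0 < b) : SchwartzMap (Ed d) ℝ where
  toFun x := Real.exp (-b * ‖x‖ ^ 2)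
  smooth' := Real.contDiff_exp.comp (contDiff_const.mul (contDiff_norm_sq ℝ))
  decay' := by
    intro m n
    have hq : (fun x : Ed d => -b * ‖x‖ ^ 2).HasTemperateGrowth := by fun_prop
    obtain ⟨k, C, hC, h⟩ := norm_iteratedFDeriv_exp_comp_le hq n
    obtain ⟨M, hM, hMle⟩ := one_add_sq_pow_mul_exp_le hb (m + k)
    refine ⟨2 ^ (m + k) * C * M, fun x => ?_⟩
    have h0 := norm_nonneg x
    -- `1 + r ≤ 2 (1 + r²)` turns both polynomial factors into powers of `1 + r²`.
    have h1 : 1 + ‖x‖ ≤ 2 * (1 + ‖x‖ ^ 2) := by nlinarith [sq_nonneg (‖x‖ - 1)]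
    calc _ ≤ (1 + ‖x‖) ^ m * (C * (1 + ‖x‖) ^ k * Real.exp (-b * ‖x‖ ^ 2)) := by
            gcongr
            · linarith
            · exact h x
      _ = C * ((1 + ‖x‖) ^ (m + k) * Real.exp (-b * ‖x‖ ^ 2)) := by rw [pow_add]; ring
      _ ≤ C * ((2 * (1 + ‖x‖ ^ 2)) ^ (m + k) * Real.exp (-b * ‖x‖ ^ 2)) := by gcongr
      _ = 2 ^ (m + k) * C * ((1 + ‖x‖ ^ 2) ^ (m + k) * Real.exp (-b * ‖x‖ ^ 2)) := by
            rw [mul_pow]; ring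
      _ ≤ _ := by gcongr; exact hMle _

lemma hasTemperateGrowth_char (d : ℕ) (η : Ed d) :
    (fun x : Ed d => Complex.exp (-(Complex.I * ((⟪η, x⟫ : ℝ) : ℂ)))).HasTemperateGrowth := by
  have hc : Real.cos.HasTemperateGrowth := ⟨Real.contDiff_cos, fun n => ⟨0, 1, fun x => by
    simpa [norm_iteratedFDeriv_eq_norm_iteratedDeriv] using Real.abs_iteratedDeriv_cos_le_one n x⟩⟩
  have hs : Real.sin.HasTemperateGrowth := ⟨Real.contDiff_sin, fun n => ⟨0, 1, fun x => by
    simpa [norm_iteratedFDeriv_eq_norm_iteratedDeriv] using Real.abs_iteratedDeriv_sin_le_one n x⟩⟩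
  have hin : (fun x : Ed d => (⟪η, x⟫ : ℝ)).HasTemperateGrowth := by fun_prop
  have hc' : (fun x : Ed d => ((Real.cos ⟪η, x⟫ : ℝ) : ℂ)).HasTemperateGrowth :=
    Function.Complex.hasTemperateGrowth_ofReal.comp (hc.comp hin)
  have hs' : (fun x : Ed d => ((Real.sin ⟪η, x⟫ : ℝ) : ℂ)).HasTemperateGrowth :=
    Function.Complex.hasTemperateGrowth_ofReal.comp (hs.comp hin)
  have h := hc'.sub ((Function.HasTemperateGrowth.const Complex.I).mul hs')
  convert h using 1
  funext x
  rw [← mul_neg, mul_comm, Complex.exp_mul_I]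
  simp
  ring

/-- The modulated Gaussian `x ↦ exp (-b ‖x‖²) e^{-i η·x}` as a Schwartz function. -/
def modGaussS (d : ℕ) (b : ℝ) (hb : 0 < b) (η : Ed d) : SchwartzMap (Ed d) ℂ :=
  SchwartzMap.bilinLeftCLM (ContinuousLinearMap.lsmul ℝ ℝ) (hasTemperateGrowth_char d η)
    (gaussS d b hb)

lemma modGaussS_apply (d : ℕ) (b : ℝ) (hb : 0 < b) (η x : Ed d) :
    modGaussS d b hb η x = ((Real.exp (-b * ‖x‖ ^ 2) : ℝ) : ℂ) *
      Complex.exp (-(Complex.I * ((⟪η, x⟫ : ℝ) : ℂ))) := by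
  rw [← Complex.real_smul]
  rfl

lemma norm_modGaussS (d : ℕ) (b : ℝ) (hb : 0 < b) (η x : Ed d) :
    ‖modGaussS d b hb η x‖ = Real.exp (-b * ‖x‖ ^ 2) := by
  rw [modGaussS_apply, norm_mul, Complex.norm_real, Real.norm_of_nonneg (Real.exp_pos _).le,
    ← mul_neg, mul_comm Complex.I, ← Complex.ofReal_neg, Complex.norm_exp_ofReal_mul_I, mul_one]

/-- Modulating a Gaussian translates its Fourier transform. -/
lemma FTd_modGaussS (d : ℕ) (b : ℝ) (hb : 0 < b) (η ξ : Ed d) :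
    FTd d (fun y => modGaussS d b hb η y) ξ =
      ((π / b : ℂ) ^ (d / 2 : ℂ)) * ((Real.exp (-(1 / (4 * b)) * ‖ξ + η‖ ^ 2) : ℝ) : ℂ) := by
  have h := GaussianFourier.integral_cexp_neg_mul_sq_norm_add (b := (b : ℂ)) (by simpa using hb)
    (-Complex.I) (ξ + η)
  rw [finrank_euclideanSpace_fin] at h
  have h2 : Complex.exp ((-Complex.I) ^ 2 * (‖ξ + η‖ : ℂ) ^ 2 / (4 * (b : ℂ))) =
      ((Real.exp (-(1 / (4 * b)) * ‖ξ + η‖ ^ 2) : ℝ) : ℂ) := by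
    push_cast
    congr 1
    rw [neg_sq, Complex.I_sq]
    ring
  rw [h2] at h
  rw [← h, FTd]
  congr 1
  funext x
  rw [modGaussS_apply, Complex.ofReal_exp, ← Complex.exp_add, ← Complex.exp_add]
  congr 1
  rw [inner_add_left]
  push_cast
  ring

/-! ### Integrability from temperedness -/

lemma integrable_one_add_sq_of_tempered {d : ℕ} {μ : Measure (Ed d)} (hμ : IsTempered d μ) :
    ∃ k : ℕ, Integrable (fun ξ : Ed d => ((1 + ‖ξ‖ ^ 2) ^ k)⁻¹) μ := by
  obtain ⟨k, hk⟩ := hμ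
  have hc : Continuous (fun ξ : Ed d => ((1 + ‖ξ‖ ^ 2) ^ k)⁻¹) :=
    Continuous.inv₀ (by fun_prop) (fun x => by positivity)
  refine ⟨k, hc.aestronglyMeasurable, ?_⟩
  rw [hasFiniteIntegral_iff_ofReal (ae_of_all _ fun x => by positivity)]
  convert hk using 5 with ξ
  rw [Real.rpow_neg (by positivity), Real.rpow_natCast]

lemma sigmaFinite_of_tempered {d : ℕ} {μ : Measure (Ed d)} (hμ : IsTempered d μ) :
    SigmaFinite μ := by
  obtain ⟨k, hk⟩ := integrable_one_add_sq_of_tempered hμ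
  have : IsFiniteMeasureOnCompacts μ := by
    refine ⟨fun K hK => ?_⟩
    obtain ⟨R, hR⟩ := hK.isBounded.exists_norm_le
    have h := hk.measure_norm_ge_lt_top (ε := ((1 + R ^ 2) ^ k)⁻¹) (by positivity)
    refine (measure_mono fun x hx => ?_).trans_lt h
    have := hR x hx
    have h0 := norm_nonneg x
    simp only [Set.mem_ofPred_eq]
    rw [Real.norm_of_nonneg (by positivity)]
    gcongr
  infer_instance

lemma integrable_gauss_of_tempered {d : ℕ} {μ : Measure (Ed d)} (hμ : IsTempered d μ)
    {a : ℝ} (ha : 0 < a) (η : Ed d) :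
    Integrable (fun ξ => Real.exp (-a * ‖ξ + η‖ ^ 2)) μ := by
  obtain ⟨k, hk⟩ := integrable_one_add_sq_of_tempered hμ
  obtain ⟨C, hC, hCle⟩ := one_add_sq_pow_mul_exp_le ha k
  refine (hk.const_mul ((2 * (1 + ‖η‖ ^ 2)) ^ k * C)).mono'
    (Continuous.aestronglyMeasurable (by fun_prop)) (ae_of_all _ fun ξ => ?_)
  rw [Real.norm_of_nonneg (Real.exp_pos _).le, ← div_eq_mul_inv, le_div_iff₀ (by positivity)]
  -- Peetre inequality: shifting the weight costs only the factor `2 (1 + ‖η‖²)`.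
  have h1 : 1 + ‖ξ‖ ^ 2 ≤ 2 * (1 + ‖η‖ ^ 2) * (1 + ‖ξ + η‖ ^ 2) := by
    have h2 : ‖ξ‖ ≤ ‖ξ + η‖ + ‖η‖ := by simpa using norm_sub_le (ξ + η) η
    nlinarith [norm_nonneg ξ, norm_nonneg η, norm_nonneg (ξ + η), sq_nonneg (‖ξ + η‖ - ‖η‖),
      mul_nonneg (sq_nonneg ‖η‖) (sq_nonneg ‖ξ + η‖)]
  calc _ ≤ Real.exp (-a * ‖ξ + η‖ ^ 2) * (2 * (1 + ‖η‖ ^ 2) * (1 + ‖ξ + η‖ ^ 2)) ^ k := by gcongr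
    _ = (2 * (1 + ‖η‖ ^ 2)) ^ k * ((1 + ‖ξ + η‖ ^ 2) ^ k * Real.exp (-a * ‖ξ + η‖ ^ 2)) := by
      rw [mul_pow _ (1 + ‖ξ + η‖ ^ 2)]; ring
    _ ≤ _ := by gcongr; exact hCle _

/-! ### Translation and superposition of Gaussians -/

/-- The positive-definiteness step: since `f ≥ 0`, the `μ`-integral of a Gaussian does not increase
under translation. The triangle inequality for the Bochner integral also covers the case of a
non-integrable integrand, so integrability of the Gaussian against `f` is not needed. -/
lemma integral_gauss_translate_le {d : ℕ} {μ : Measure (Ed d)}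
    {f : Ed d → ℝ≥0∞} (hP : ParsevalFT d f μ) {a : ℝ} (ha : 0 < a) (η : Ed d) :
    ∫ ξ, Real.exp (-a * ‖ξ + η‖ ^ 2) ∂μ ≤ ∫ ξ, Real.exp (-a * ‖ξ‖ ^ 2) ∂μ := by
  have hb : 0 < 1 / (4 * a) := by positivity
  set b := 1 / (4 * a) with hbdef
  have hab : 1 / (4 * b) = a := by rw [hbdef]; field_simp
  set K : ℂ := (((2 * π) ^ d : ℝ)⁻¹ : ℂ) * (π / b : ℂ) ^ (d / 2 : ℂ) with hK
  have hK0 : 0 < ‖K‖ := by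
    rw [norm_pos_iff, hK]
    refine mul_ne_zero (inv_ne_zero ?_) ?_
    · exact_mod_cast (by positivity : ((2 * π) ^ d : ℝ) ≠ 0)
    · rw [Complex.cpow_ne_zero_iff]
      left
      exact_mod_cast (by positivity : (π / b : ℝ) ≠ 0)
  have hpar : ∀ ζ : Ed d, ∫ x, modGaussS d b hb ζ x * (((f x).toReal : ℝ) : ℂ) =
      K * ((∫ ξ, Real.exp (-a * ‖ξ + ζ‖ ^ 2) ∂μ : ℝ) : ℂ) := by
    intro ζ
    rw [hP (modGaussS d b hb ζ)]
    simp_rw [FTd_modGaussS, hab]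
    rw [integral_const_mul, integral_complex_ofReal, hK, mul_assoc]
  have hnn : ∀ ζ : Ed d, 0 ≤ ∫ ξ, Real.exp (-a * ‖ξ + ζ‖ ^ 2) ∂μ := fun ζ =>
    integral_nonneg fun _ => (Real.exp_pos _).le
  have hnorm : ∀ ζ : Ed d, ‖∫ x, modGaussS d b hb ζ x * (((f x).toReal : ℝ) : ℂ)‖ =
      ‖K‖ * ∫ ξ, Real.exp (-a * ‖ξ + ζ‖ ^ 2) ∂μ := by
    intro ζ
    rw [hpar, norm_mul, Complex.norm_real, Real.norm_of_nonneg (hnn ζ)]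
  have h0 : ‖∫ x, modGaussS d b hb 0 x * (((f x).toReal : ℝ) : ℂ)‖ =
      ∫ x, Real.exp (-b * ‖x‖ ^ 2) * (f x).toReal := by
    have : ∀ x, modGaussS d b hb 0 x * (((f x).toReal : ℝ) : ℂ) =
        ((Real.exp (-b * ‖x‖ ^ 2) * (f x).toReal : ℝ) : ℂ) := by
      intro x
      rw [modGaussS_apply]
      simp
    simp_rw [this]
    rw [integral_complex_ofReal, Complex.norm_real, Real.norm_of_nonneg]
    exact integral_nonneg fun x => mul_nonneg (Real.exp_pos _).le ENNReal.toReal_nonneg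
  have hle : ‖∫ x, modGaussS d b hb η x * (((f x).toReal : ℝ) : ℂ)‖ ≤
      ∫ x, Real.exp (-b * ‖x‖ ^ 2) * (f x).toReal := by
    refine (norm_integral_le_integral_norm _).trans (le_of_eq ?_)
    congr 1
    funext x
    rw [norm_mul, norm_modGaussS, Complex.norm_real, Real.norm_of_nonneg ENNReal.toReal_nonneg]
  rw [← h0, hnorm, hnorm] at hle
  simpa using le_of_mul_le_mul_left hle hK0

lemma lintegral_gauss_translate_le {d : ℕ} {μ : Measure (Ed d)} (hμ : IsTempered d μ)
    {f : Ed d → ℝ≥0∞} (hP : ParsevalFT d f μ) {a : ℝ} (ha : 0 < a) (η : Ed d) :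
    ∫⁻ ξ, ENNReal.ofReal (Real.exp (-a * ‖ξ + η‖ ^ 2)) ∂μ ≤
      ∫⁻ ξ, ENNReal.ofReal (Real.exp (-a * ‖ξ‖ ^ 2)) ∂μ := by
  have h0 : Integrable (fun ξ => Real.exp (-a * ‖ξ‖ ^ 2)) μ := by
    simpa using integrable_gauss_of_tempered hμ ha 0
  rw [← ofReal_integral_eq_lintegral_ofReal (integrable_gauss_of_tempered hμ ha η)
      (ae_of_all _ fun _ => (Real.exp_pos _).le),
    ← ofReal_integral_eq_lintegral_ofReal h0 (ae_of_all _ fun _ => (Real.exp_pos _).le)]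
  exact ENNReal.ofReal_le_ofReal (integral_gauss_translate_le hP ha η)

lemma lintegral_exp_neg_mul_Ioi {A : ℝ} (hA : 0 < A) :
    ∫⁻ s in Set.Ioi (0 : ℝ), ENNReal.ofReal (Real.exp (-A * s)) = ENNReal.ofReal (1 / A) := by
  rw [← ofReal_integral_eq_lintegral_ofReal (exp_neg_integrableOn_Ioi 0 hA)
      (ae_of_all _ fun _ => (Real.exp_pos _).le), integral_exp_mul_Ioi (by linarith)]
  simp [neg_div_neg_eq]

/-- The resolvent weight `1 / (1 + t² ‖ξ‖²)` as a superposition of Gaussians. -/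
lemma lintegral_resolvent_eq {d : ℕ} {μ : Measure (Ed d)} [SFinite μ] (t : ℝ) (η : Ed d) :
    ∫⁻ ξ, ENNReal.ofReal (1 / (1 + t ^ 2 * ‖ξ + η‖ ^ 2)) ∂μ =
      ∫⁻ s in Set.Ioi (0 : ℝ), ENNReal.ofReal (Real.exp (-s)) *
        ∫⁻ ξ, ENNReal.ofReal (Real.exp (-(s * t ^ 2) * ‖ξ + η‖ ^ 2)) ∂μ := by
  have h : ∀ ξ : Ed d, ENNReal.ofReal (1 / (1 + t ^ 2 * ‖ξ + η‖ ^ 2)) =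
      ∫⁻ s in Set.Ioi (0 : ℝ), ENNReal.ofReal (Real.exp (-s)) *
        ENNReal.ofReal (Real.exp (-(s * t ^ 2) * ‖ξ + η‖ ^ 2)) := by
    intro ξ
    rw [← lintegral_exp_neg_mul_Ioi (by positivity)]
    congr 1
    funext s
    rw [← ENNReal.ofReal_mul (Real.exp_pos _).le, ← Real.exp_add]
    ring_nf
  simp_rw [h]
  rw [lintegral_lintegral_swap (Measurable.aemeasurable (by fun_prop))]
  congr 1
  funext s
  rw [lintegral_const_mul _ (by fun_prop)]

lemma sinc_sq_le (t : ℝ) (r : ℝ) :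
    sinc t r ^ 2 ≤ 4 * t ^ 2 * (1 / (1 + t ^ 2 * r ^ 2)) := by
  rw [mul_one_div, le_div_iff₀ (by positivity)]
  by_cases hr : r = 0
  · simp [_root_.sinc, hr]
    nlinarith [sq_nonneg t]
  · rw [_root_.sinc, if_neg hr, div_pow]
    have hr2 : 0 < r ^ 2 := by positivity
    rw [div_mul_eq_mul_div, div_le_iff₀ hr2]
    have h1 : Real.sin (t * r) ^ 2 ≤ (t * r) ^ 2 := sq_le_sq.2 Real.abs_sin_le_abs
    have h2 : Real.sin (t * r) ^ 2 ≤ 1 := Real.sin_sq_le_one _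
    nlinarith [mul_nonneg (sq_nonneg (t * r)) (sub_nonneg.2 h2)]

/-- For any `t > 0`,
`sup_η ∫ (sin(t|ξ+η|)/|ξ+η|)² μ(dξ) ≤ 4t² ∫ 1/(1+t²|ξ|²) μ(dξ)`. -/
theorem stmt6 (d : ℕ) (μ : Measure (Ed d)) (hμt : IsTempered d μ)
    (f : Ed d → ℝ≥0∞) (hfm : Measurable f) (hfloc : LocIntENN d f)
    (hffin : ∀ x : Ed d, x ≠ 0 → f x < ⊤) (hP : ParsevalFT d f μ)
    (t : ℝ) (ht : 0 < t) :
    (⨆ η : Ed d, ∫⁻ ξ, ENNReal.ofReal ((sinc t ‖ξ + η‖) ^ 2) ∂μ) ≤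
      ENNReal.ofReal (4 * t ^ 2) *
        ∫⁻ ξ, ENNReal.ofReal (1 / (1 + t ^ 2 * ‖ξ‖ ^ 2)) ∂μ := by
  have := sigmaFinite_of_tempered hμt
  refine iSup_le fun η => ?_
  calc ∫⁻ ξ, ENNReal.ofReal ((sinc t ‖ξ + η‖) ^ 2) ∂μ
      ≤ ∫⁻ ξ, ENNReal.ofReal (4 * t ^ 2) *
          ENNReal.ofReal (1 / (1 + t ^ 2 * ‖ξ + η‖ ^ 2)) ∂μ := by
        refine lintegral_mono fun ξ => ?_
        rw [← ENNReal.ofReal_mul (by positivity)]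
        exact ENNReal.ofReal_le_ofReal (sinc_sq_le t _)
    _ = ENNReal.ofReal (4 * t ^ 2) *
          ∫⁻ ξ, ENNReal.ofReal (1 / (1 + t ^ 2 * ‖ξ + η‖ ^ 2)) ∂μ :=
        lintegral_const_mul _ (by fun_prop)
    _ ≤ _ := by
        gcongr ENNReal.ofReal (4 * t ^ 2) * ?_
        have h0 := lintegral_resolvent_eq (μ := μ) t 0
        simp only [add_zero] at h0
        rw [lintegral_resolvent_eq, h0]
        refine setLIntegral_mono' measurableSet_Ioi fun s hs => ?_
        have hs' : 0 < s := hs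
        exact mul_le_mul' le_rfl (lintegral_gauss_translate_le hμt hP (by positivity) η)
end
end
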